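/- arXiv:2004.14012 — 7 statements merged into one kernel-verified Lean document; each statement's English description precedes it below -/
import Mathlib

section
/- Let λ > 1 be real and z, w ∈ Π. Then the Laplace transform of the function t ↦ (2^{λ−1}/(2π Γ(λ−1))) t^{λ−1} e^{−it·conj(z)} recovers the Bergman kernel: (2^{λ−1}/(2π Γ(λ−1))) ∫₀^∞ t^{λ−1} e^{it(w − conj(z))} dt = K_λ(w,z). (The integral converges absolutely since Im(w − conj(z)) = Im w + Im z > 0.) -/
/-!
Put `u = (w - conj z) / (2 * I)`, so that `I * (w - conj z) = -(2 * u)` and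
`u.re = (w.im + z.im) / 2 > 0`. The integral is then a Gamma integral with complex rate `2 * u`,
equal to `(2 * u) ^ (-lam) * Γ(lam)`. The constants combine through
`Γ(lam) = (lam - 1) * Γ(lam - 1)` and `(2 * u) ^ (-lam) = 2 ^ (-lam) * u ^ (-lam)`, the latter
being valid for principal powers since `2` is a positive real.

The Gamma integral at a complex rate (`integral_rpow_mul_cexp_neg_mul_Ioi`) follows from the one at
a real rate by the identity theorem: as a function of the rate, the integral is the complex moment
generating function of the measure `t ^ (a - 1) dt` on the positive half-line (`gammaWeight`),
reflected in the origin, and Mathlib knows that this is holomorphic.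
-/

open ComplexConjugate MeasureTheory
open Complex (I)

noncomputable section

/-- The upper half-plane Π = {z ∈ ℂ : Im z > 0}. -/
def UHP : Set ℂ := {z : ℂ | 0 < z.im}

/-- Weighted Bergman kernel K_λ(z,w) of the upper half-plane (principal branch power). -/
def bergmanK (lam : ℝ) (z w : ℂ) : ℂ :=
  ((lam - 1) / (4 * Real.pi)) * ((z - conj w) / (2 * I)) ^ (-(lam : ℂ))

/-- The unnormalised measure `t ^ (a - 1) dt` on the positive half-line. -/
def gammaWeight (a : ℝ) : Measure ℝ :=
  (volume.restrict (Set.Ioi 0)).withDensity fun t => ENNReal.ofReal (t ^ (a - 1))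

lemma complexMGF_gammaWeight (a : ℝ) (s : ℂ) :
    ProbabilityTheory.complexMGF id (gammaWeight a) s =
      ∫ t in Set.Ioi (0 : ℝ), ((t ^ (a - 1) : ℝ) : ℂ) * Complex.exp (s * t) := by
  rw [ProbabilityTheory.complexMGF, gammaWeight,
    integral_withDensity_eq_integral_toReal_smul (by fun_prop) (by simp)]
  refine setIntegral_congr_fun measurableSet_Ioi fun t (ht : 0 < t) => ?_
  simp only [id, ENNReal.toReal_ofReal (Real.rpow_nonneg ht.le _), Complex.real_smul]

/-- All negative exponents are admissible for `gammaWeight a`, so its complex moment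
generating function is holomorphic on `s.re < 0`. -/
lemma Iio_subset_integrableExpSet {a : ℝ} (ha : 0 < a) :
    Set.Iio 0 ⊆ ProbabilityTheory.integrableExpSet id (gammaWeight a) := by
  intro s (hs : s < 0)
  rw [ProbabilityTheory.integrableExpSet, Set.mem_ofPred_eq, gammaWeight,
    integrable_withDensity_iff_integrable_smul' (by fun_prop) (by simp)]
  have h := integrableOn_rpow_mul_exp_neg_mul_rpow (s := a - 1) (p := 1) (b := -s)
    (by linarith) one_pos (by linarith)
  refine h.congr_fun (fun t (ht : 0 < t) => ?_) measurableSet_Ioi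
  simp [ENNReal.toReal_ofReal (Real.rpow_nonneg ht.le _)]

/-- The Gamma integral with a complex rate `r`, obtained from the case of real `r` by analytic
continuation in `r`. -/
lemma integral_rpow_mul_cexp_neg_mul_Ioi {a : ℝ} (ha : 0 < a) {r : ℂ} (hr : 0 < r.re) :
    ∫ t in Set.Ioi (0 : ℝ), ((t ^ (a - 1) : ℝ) : ℂ) * Complex.exp (-r * t) =
      r ^ (-(a : ℂ)) * Complex.Gamma a := by
  rw [← complexMGF_gammaWeight]
  have hsub : {s : ℂ | s.re < 0} ⊆
      {s | s.re ∈ interior (ProbabilityTheory.integrableExpSet id (gammaWeight a))} :=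
    fun s hs => interior_maximal (Iio_subset_integrableExpSet ha) isOpen_Iio hs
  have hf := (ProbabilityTheory.analyticOnNhd_complexMGF (X := id) (μ := gammaWeight a)).mono hsub
  have hg : AnalyticOnNhd ℂ (fun s : ℂ => (-s) ^ (-(a : ℂ)) * Complex.Gamma a)
      {s : ℂ | s.re < 0} := by
    intro s (hs : s.re < 0)
    have hslit : -s ∈ Complex.slitPlane := Or.inl (by simpa using hs)
    exact (analyticAt_id.neg.cpow analyticAt_const hslit).mul analyticAt_const
  have hreal : ∀ x : ℝ, x < 0 → ProbabilityTheory.complexMGF id (gammaWeight a) x =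
      (-(x : ℂ)) ^ (-(a : ℂ)) * Complex.Gamma a := by
    intro x hx
    have hx' : 0 < -x := by linarith
    have h := congrArg (fun y : ℝ => (y : ℂ)) (Real.integral_rpow_mul_exp_neg_mul_Ioi ha hx')
    simp only [← integral_complex_ofReal] at h
    rw [complexMGF_gammaWeight, Complex.Gamma_ofReal]
    have hpow : (-(x : ℂ)) ^ (-(a : ℂ)) = (((1 / -x) ^ a : ℝ) : ℂ) := by
      rw [one_div, Real.inv_rpow hx'.le, ← Real.rpow_neg hx'.le, Complex.ofReal_cpow hx'.le]
      push_cast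
      rfl
    rw [hpow, ← Complex.ofReal_mul, ← h]
    refine setIntegral_congr_fun measurableSet_Ioi fun t _ => ?_
    simp
  -- the real axis accumulates at `-1`, which supplies the frequent equality near that point
  have htend : Filter.Tendsto (fun x : ℝ => (x : ℂ)) (nhdsWithin (-1) {-1}ᶜ)
      (nhdsWithin ((-1 : ℝ) : ℂ) {((-1 : ℝ) : ℂ)}ᶜ) :=
    Complex.continuous_ofReal.continuousAt.continuousWithinAt.tendsto_nhdsWithin
      fun x hx h => hx (Complex.ofReal_injective h)
  have hev : ∀ᶠ x : ℝ in nhdsWithin (-1) {-1}ᶜ, x < 0 :=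
    nhdsWithin_le_nhds (Iio_mem_nhds (by norm_num))
  have heq := hf.eqOn_of_preconnected_of_frequently_eq hg
    (convex_halfSpace_re_lt 0).isPreconnected (z₀ := ((-1 : ℝ) : ℂ)) (by simp)
    (htend.frequently (hev.mono hreal).frequently)
  simpa using heq (show -r ∈ {s : ℂ | s.re < 0} by simpa using hr)

/-- the Laplace transform of t ↦ (2^{λ−1}/(2π Γ(λ−1))) t^{λ−1} e^{−it conj(z)}
recovers the Bergman kernel: (2^{λ−1}/(2π Γ(λ−1))) ∫₀^∞ t^{λ−1} e^{it(w−conj z)} dt = K_λ(w,z). -/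
theorem laplace_of_bergman_kernel (lam : ℝ) (hlam : 1 < lam)
    (z w : ℂ) (hz : z ∈ UHP) (hw : w ∈ UHP) :
    (((2 : ℝ) ^ (lam - 1) / (2 * Real.pi * Real.Gamma (lam - 1)) : ℝ) : ℂ) *
        ∫ t in Set.Ioi (0 : ℝ),
          ((t ^ (lam - 1) : ℝ) : ℂ) * Complex.exp (I * t * (w - conj z)) =
      bergmanK lam w z := by
  set u : ℂ := (w - conj z) / (2 * I) with hu
  have hzi : 0 < z.im := hz
  have hwi : 0 < w.im := hw
  have huv : I * (w - conj z) = -(2 * u) := by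
    rw [hu]
    field_simp
    linear_combination (w - conj z) * Complex.I_sq
  have hure : 0 < (2 * u).re := by
    have : 2 * u = -(I * (w - conj z)) := by rw [huv, neg_neg]
    rw [this]
    simp
    linarith
  have hlap : ∫ t in Set.Ioi (0 : ℝ),
      ((t ^ (lam - 1) : ℝ) : ℂ) * Complex.exp (I * t * (w - conj z)) =
        (2 * u) ^ (-(lam : ℂ)) * Complex.Gamma lam := by
    rw [← integral_rpow_mul_cexp_neg_mul_Ioi (by linarith) hure]
    refine setIntegral_congr_fun measurableSet_Ioi fun t _ => ?_
    congr 2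
    linear_combination (t : ℂ) * huv
  have hpow : (2 * u) ^ (-(lam : ℂ)) = (((2 : ℝ) ^ (-lam) : ℝ) : ℂ) * u ^ (-(lam : ℂ)) := by
    have hu0 : u ≠ 0 := by
      rintro h
      simp [h] at hure
    have h2 : (2 : ℂ) = ((2 : ℝ) : ℂ) := by norm_num
    rw [Complex.ofReal_cpow two_pos.le, Complex.ofReal_neg, h2,
      Complex.cpow_def_of_ne_zero (mul_ne_zero (by simp) hu0), Complex.log_ofReal_mul two_pos hu0,
      Complex.ofReal_log two_pos.le, add_mul, Complex.exp_add,
      ← Complex.cpow_def_of_ne_zero (by simp), ← Complex.cpow_def_of_ne_zero hu0]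
  have hG : Complex.Gamma lam = (((lam - 1) * Real.Gamma (lam - 1) : ℝ) : ℂ) := by
    rw [Complex.Gamma_ofReal, ← Real.Gamma_add_one (by linarith), sub_add_cancel]
  have hG0 : Real.Gamma (lam - 1) ≠ 0 := (Real.Gamma_pos_of_pos (by linarith)).ne'
  have hconst : (2 : ℝ) ^ (lam - 1) / (2 * Real.pi * Real.Gamma (lam - 1)) *
      ((2 : ℝ) ^ (-lam) * ((lam - 1) * Real.Gamma (lam - 1))) = (lam - 1) / (4 * Real.pi) := by
    have h2 : (2 : ℝ) ^ (lam - 1) * (2 : ℝ) ^ (-lam) = 1 / 2 := by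
      rw [← Real.rpow_add two_pos, show lam - 1 + -lam = -1 by ring, Real.rpow_neg_one, one_div]
    have hpi := Real.pi_ne_zero
    field_simp
    linear_combination 4 * (lam - 1) * h2
  rw [hlap, hpow, hG, bergmanK, ← hu]
  have hc := congrArg (fun x : ℝ => (x : ℂ)) hconst
  simp only [Complex.ofReal_mul, Complex.ofReal_div, Complex.ofReal_sub, Complex.ofReal_one] at hc ⊢
  push_cast at hc ⊢
  linear_combination u ^ (-(lam : ℂ)) * hc
end
end

section
/- Let λ', λ'', λ''' be real numbers > 1 with l := (λ''' − λ' − λ'')/2 a nonnegative integer (so λ''' = λ' + λ'' + 2l). Then for all w₁, w₂, z ∈ Π: ∫₀^∞ (2^{λ'''−1}/(2π Γ(λ'''−1))) · t^{λ'''−1} · e^{it(w₂ − conj(z))} · ₁F₁(λ'+l, λ'+λ''+2l; −i(w₂−w₁)t) dt = ((λ'''−1)/(4π)) · ((w₁ − conj(z))/(2i))^{−(λ'+l)} · ((w₂ − conj(z))/(2i))^{−(λ''+l)}, where the complex powers are principal-branch powers. -/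
/-!
The integrand is, up to a constant, a one-sided convolution. With `f u = u^(a-1) e^(-Bu)` and
`g u = u^(b-1) e^(-Au)`, expanding `e^((A-B)u)` and evaluating the resulting Beta integrals gives
`(f * g)(t) = Γ(a)Γ(b)/Γ(a+b) · t^(a+b-1) e^(-At) ₁F₁(a, a+b; (A-B)t)`
(Euler's integral for `₁F₁`, `euler_integral_kummer`). The integral over `(0, ∞)` of a convolution
is the product of the integrals, here `Γ(a) B^(-a) · Γ(b) A^(-b)` (`laplace_cpow`, obtained from
real parameters by the identity theorem). This yields the Laplace transform `laplace_kummer` for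
all `A`, `B` with positive real part, without any restriction on `|A - B|` such as termwise
integration of the hypergeometric series would impose. The theorem is the case
`A = -i(w₂ - conj z)`, `B = -i(w₁ - conj z)`, `a = λ' + l`, `b = λ'' + l`.
-/

open ComplexConjugate MeasureTheory
open Complex (I)

noncomputable section

/-- Pochhammer symbol (x)_n = x(x+1)⋯(x+n-1). -/
def poch (x : ℝ) (n : ℕ) : ℝ := ∏ k ∈ Finset.range n, (x + k)

/-- Kummer's confluent hypergeometric function ₁F₁(a,b;x) = Σ ((a)_n/(b)_n) x^n/n!. -/
def kummer (a b : ℝ) (x : ℂ) : ℂ :=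
  ∑' n : ℕ, ((poch a n : ℂ) / (poch b n : ℂ)) * x ^ n / (n.factorial : ℂ)

lemma poch_mul_Gamma {x : ℝ} (hx : 0 < x) (n : ℕ) :
    (poch x n : ℂ) * Complex.Gamma x = Complex.Gamma (x + n) := by
  induction n with
  | zero => simp [poch]
  | succ n ih =>
    have h0 : (x : ℂ) + n ≠ 0 := by
      have : x + n ≠ 0 := by positivity
      exact_mod_cast this
    rw [Nat.cast_succ, ← add_assoc, Complex.Gamma_add_one _ h0, ← ih, poch, poch,
      Finset.prod_range_succ]
    push_cast
    ring

lemma Gamma_ofReal_ne_zero {x : ℝ} (hx : 0 < x) : Complex.Gamma x ≠ 0 :=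
  Complex.Gamma_ne_zero_of_re_pos (by simpa using hx)

lemma betaIntegral_eq_poch {a b : ℝ} (ha : 0 < a) (hb : 0 < b) (n : ℕ) :
    Complex.betaIntegral (a + n) b =
      Complex.Gamma a * Complex.Gamma b / Complex.Gamma (a + b) *
        ((poch a n : ℂ) / (poch (a + b) n : ℂ)) := by
  have hab : 0 < a + b := by positivity
  have h1 := Complex.Gamma_mul_Gamma_eq_betaIntegral (s := a + n) (t := b)
    (by simpa using (by positivity : 0 < a + n)) (by simpa using hb)
  have h2 := poch_mul_Gamma ha n
  have h3 := poch_mul_Gamma hab n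
  have h4 : Complex.Gamma ((a : ℂ) + b) ≠ 0 := by
    simpa using Gamma_ofReal_ne_zero hab
  have h5 : (poch (a + b) n : ℂ) ≠ 0 := by
    have : 0 < poch (a + b) n := Finset.prod_pos fun k _ => by positivity
    exact_mod_cast this.ne'
  rw [← h2, show (a : ℂ) + n + b = ((a + b : ℝ) : ℂ) + n by push_cast; ring, ← h3] at h1
  push_cast at h1
  field_simp
  linear_combination -h1

/-- Euler's integral representation of `₁F₁`, rescaled from `[0, 1]` to `[0, t]`. -/
lemma euler_integral_kummer {a b t : ℝ} (ha : 0 < a) (hb : 0 < b) (ht : 0 < t) (x : ℂ) :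
    ∫ u in (0 : ℝ)..t, (u : ℂ) ^ ((a : ℂ) - 1) * ((t : ℂ) - u) ^ ((b : ℂ) - 1) *
        Complex.exp (x * u) =
      Complex.Gamma a * Complex.Gamma b / Complex.Gamma (a + b) *
        (t : ℂ) ^ ((a : ℂ) + b - 1) * kummer a (a + b) (x * t) := by
  have ht0 : (t : ℂ) ≠ 0 := by exact_mod_cast ht.ne'
  set G : ℝ → ℂ := fun u => (u : ℂ) ^ ((a : ℂ) - 1) * ((t : ℂ) - u) ^ ((b : ℂ) - 1) with hG
  have hGi : IntervalIntegrable G volume 0 t := by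
    -- a nonzero Bochner integral certifies integrability, because of its junk value `0`
    apply intervalIntegral.intervalIntegrable_of_integral_ne_zero
    rw [hG, Complex.betaIntegral_scaled _ _ ht]
    refine mul_ne_zero (by simp [Complex.cpow_eq_zero_iff, ht0]) fun h => ?_
    have h1 := Complex.Gamma_mul_Gamma_eq_betaIntegral (s := a) (t := b)
      (by simpa using ha) (by simpa using hb)
    rw [h, mul_zero] at h1
    exact mul_ne_zero (Gamma_ofReal_ne_zero ha) (Gamma_ofReal_ne_zero hb) h1
  have hsum := intervalIntegral.hasSum_integral_of_dominated_convergence (μ := volume)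
    (a := 0) (b := t)
    (F := fun (n : ℕ) (u : ℝ) => G u * ((x * u) ^ n / (n.factorial : ℂ)))
    (f := fun u => G u * Complex.exp (x * u))
    (fun n u => ‖G u‖ * ((‖x‖ * t) ^ n / (n.factorial : ℝ)))
    (fun n => by
      have hc : ContinuousOn (fun u : ℝ => (x * u) ^ n / (n.factorial : ℂ)) (Set.uIcc 0 t) := by
        fun_prop
      exact (hGi.mul_continuousOn hc).def'.aestronglyMeasurable)
    (fun n => Filter.Eventually.of_forall fun u hu => by
      rw [Set.uIoc_of_le ht.le] at hu
      simp only [norm_mul, norm_div, norm_pow, Complex.norm_real, Complex.norm_natCast]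
      rw [Real.norm_of_nonneg hu.1.le]
      have h1 := hu.1.le
      have h2 := hu.2
      gcongr)
    (Filter.Eventually.of_forall fun u _ =>
      (Real.summable_pow_div_factorial _).mul_left _)
    (by
      simp_rw [tsum_mul_left]
      exact hGi.norm.mul_const _)
    (Filter.Eventually.of_forall fun u _ => by
      rw [Complex.exp_eq_exp_ℂ]
      exact (NormedSpace.expSeries_div_hasSum_exp (x * (u : ℂ))).mul_left _)
  rw [← hsum.tsum_eq, kummer, ← tsum_mul_left]
  congr 1 with n
  have hpt : ∫ u in (0 : ℝ)..t, G u * ((x * u) ^ n / (n.factorial : ℂ)) =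
      ∫ u in (0 : ℝ)..t, (x ^ n / (n.factorial : ℂ)) *
        ((u : ℂ) ^ ((a : ℂ) + n - 1) * ((t : ℂ) - u) ^ ((b : ℂ) - 1)) := by
    refine intervalIntegral.integral_congr_ae (Filter.Eventually.of_forall fun u hu => ?_)
    rw [Set.uIoc_of_le ht.le] at hu
    have hu0 : (u : ℂ) ≠ 0 := by exact_mod_cast hu.1.ne'
    rw [show (a : ℂ) + n - 1 = (a - 1) + n by ring, Complex.cpow_add _ _ hu0,
      Complex.cpow_natCast, hG]
    ring
  rw [hpt, intervalIntegral.integral_const_mul, Complex.betaIntegral_scaled _ _ ht,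
    betaIntegral_eq_poch ha hb, show (a : ℂ) + n + b - 1 = (a + b - 1) + n by ring,
    Complex.cpow_add _ _ ht0, Complex.cpow_natCast]
  ring

/-- The Laplace transform of `t^(a-1)`. For real `A` this is the Gamma integral; the left side is
the complex moment generating function, at `-A`, of the measure `t^(a-1) dt` on `(0, ∞)`, so both
sides are analytic in the right half-plane and the identity theorem applies. -/
lemma laplace_cpow {a : ℝ} (ha : 0 < a) {A : ℂ} (hA : 0 < A.re) :
    ∫ t in Set.Ioi (0 : ℝ), (t : ℂ) ^ ((a : ℂ) - 1) * Complex.exp (-(A * t)) =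
      (1 / A) ^ (a : ℂ) * Complex.Gamma a := by
  have hρ : Measurable fun t : ℝ => (t ^ (a - 1)).toNNReal := by fun_prop
  set μ : Measure ℝ := (volume.restrict (Set.Ioi 0)).withDensity
    fun t : ℝ => ((t ^ (a - 1)).toNNReal : ENNReal) with hμ
  have hF : ∀ z : ℂ, ProbabilityTheory.complexMGF id μ z =
      ∫ t in Set.Ioi (0 : ℝ), (t : ℂ) ^ ((a : ℂ) - 1) * Complex.exp (z * t) := by
    intro z
    rw [ProbabilityTheory.complexMGF, hμ, integral_withDensity_eq_integral_smul hρ]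
    refine setIntegral_congr_fun measurableSet_Ioi fun t ht => ?_
    have ht' : 0 ≤ t := le_of_lt ht
    simp only [NNReal.smul_def, id, Real.coe_toNNReal _ (Real.rpow_nonneg ht' (a - 1)),
      Complex.real_smul, Complex.ofReal_cpow ht']
    push_cast
    rfl
  have hexp : ∀ x : ℝ, x < 0 → x ∈ interior (ProbabilityTheory.integrableExpSet id μ) := by
    have hsub : Set.Iio (0 : ℝ) ⊆ ProbabilityTheory.integrableExpSet id μ := by
      intro x hx
      rw [ProbabilityTheory.integrableExpSet, Set.mem_ofPred_eq, hμ,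
        integrable_withDensity_iff_integrable_smul hρ]
      refine IntegrableOn.congr_fun (integrableOn_rpow_mul_exp_neg_mul_rpow
        (s := a - 1) (p := 1) (b := -x) (by linarith) one_pos (by simpa using hx))
        (fun t ht => ?_) measurableSet_Ioi
      simp [NNReal.smul_def, Real.rpow_nonneg (le_of_lt ht)]
    exact fun x hx => interior_maximal hsub isOpen_Iio hx
  have hopen : IsOpen {z : ℂ | z.re < 0} := isOpen_lt Complex.continuous_re continuous_const
  have hL : AnalyticOnNhd ℂ (ProbabilityTheory.complexMGF id μ) {z : ℂ | z.re < 0} :=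
    ProbabilityTheory.analyticOnNhd_complexMGF.mono fun z hz => hexp _ hz
  have hR : AnalyticOnNhd ℂ (fun z : ℂ => (1 / (-z)) ^ (a : ℂ) * Complex.Gamma a)
      {z : ℂ | z.re < 0} := by
    refine DifferentiableOn.analyticOnNhd (fun z hz => ?_) hopen
    have hz' : z.re < 0 := hz
    have hz0 : -z ≠ 0 := by
      intro h
      rw [neg_eq_zero.1 h] at hz'
      simp at hz'
    have hslit : 1 / (-z) ∈ Complex.slitPlane := by
      left
      rw [one_div, Complex.inv_re]
      exact div_pos (by simpa using hz') (Complex.normSq_pos.2 hz0)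
    refine DifferentiableAt.differentiableWithinAt ?_
    exact ((((differentiableAt_const 1).div differentiableAt_id.neg hz0).cpow_const hslit)).mul_const _
  have heq : Set.EqOn (ProbabilityTheory.complexMGF id μ)
      (fun z : ℂ => (1 / (-z)) ^ (a : ℂ) * Complex.Gamma a) {z : ℂ | z.re < 0} := by
    refine hL.eqOn_of_preconnected_of_frequently_eq hR
      (convex_halfSpace_re_lt 0).isPreconnected (z₀ := ((-1 : ℝ) : ℂ)) (by simp) ?_
    have hreal : ∀ᶠ x : ℝ in nhdsWithin (-1) {-1}ᶜ,
        ProbabilityTheory.complexMGF id μ x = (1 / (-(x : ℂ))) ^ (a : ℂ) * Complex.Gamma a := by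
      filter_upwards [nhdsWithin_le_nhds (Iio_mem_nhds (by norm_num : (-1 : ℝ) < 0))] with x hx
      have h := Complex.integral_cpow_mul_exp_neg_mul_Ioi (a := a) (r := -x)
        (by simpa using ha) (by simpa using hx)
      rw [hF]
      simpa using h
    have htend : Filter.Tendsto (fun x : ℝ => (x : ℂ)) (nhdsWithin (-1) {-1}ᶜ)
        (nhdsWithin (((-1 : ℝ) : ℂ)) {((-1 : ℝ) : ℂ)}ᶜ) :=
      Complex.continuous_ofReal.continuousAt.continuousWithinAt.tendsto_nhdsWithin
        fun x hx h => hx (Complex.ofReal_injective h)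
    exact htend.frequently hreal.frequently
  have h := heq (show -A ∈ {z : ℂ | z.re < 0} by simpa using hA)
  rw [hF] at h
  simpa using h

lemma integrableOn_cpow_mul_exp {a : ℝ} (ha : 0 < a) {A : ℂ} (hA : 0 < A.re) :
    IntegrableOn (fun t : ℝ => (t : ℂ) ^ ((a : ℂ) - 1) * Complex.exp (-(A * t)))
      (Set.Ioi 0) := by
  have hA0 : A ≠ 0 := by rintro rfl; simp at hA
  -- a nonzero Bochner integral certifies integrability, because of its junk value `0`
  apply Integrable.of_integral_ne_zero
  rw [laplace_cpow ha hA]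
  exact mul_ne_zero (by simp [Complex.cpow_eq_zero_iff, hA0]) (Gamma_ofReal_ne_zero ha)

/-- The Laplace transform of `t^(a+b-1) ₁F₁(a, a+b; (A-B)t)` at `A`. -/
lemma laplace_kummer {a b : ℝ} (ha : 0 < a) (hb : 0 < b) {A B : ℂ}
    (hA : 0 < A.re) (hB : 0 < B.re) :
    ∫ t in Set.Ioi (0 : ℝ), (t : ℂ) ^ ((a : ℂ) + b - 1) * Complex.exp (-(A * t)) *
        kummer a (a + b) ((A - B) * t) =
      Complex.Gamma (a + b) * (1 / B) ^ (a : ℂ) * (1 / A) ^ (b : ℂ) := by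
  have h := integral_posConvolution (integrableOn_cpow_mul_exp ha hB)
    (integrableOn_cpow_mul_exp hb hA) (ContinuousLinearMap.mul ℝ ℂ)
  simp_rw [ContinuousLinearMap.mul_apply'] at h
  rw [laplace_cpow ha hB, laplace_cpow hb hA] at h
  have key : ∀ t ∈ Set.Ioi (0 : ℝ),
      (∫ u in (0 : ℝ)..t, (u : ℂ) ^ ((a : ℂ) - 1) * Complex.exp (-(B * u)) *
        (((t - u : ℝ) : ℂ) ^ ((b : ℂ) - 1) * Complex.exp (-(A * ((t - u : ℝ) : ℂ))))) =
      Complex.Gamma a * Complex.Gamma b / Complex.Gamma (a + b) *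
        ((t : ℂ) ^ ((a : ℂ) + b - 1) * Complex.exp (-(A * t)) *
          kummer a (a + b) ((A - B) * t)) := by
    intro t ht
    have e := euler_integral_kummer ha hb ht (A - B)
    calc _ = ∫ u in (0 : ℝ)..t, Complex.exp (-(A * t)) *
          ((u : ℂ) ^ ((a : ℂ) - 1) * ((t : ℂ) - u) ^ ((b : ℂ) - 1) *
            Complex.exp ((A - B) * u)) := by
          congr 1 with u
          have : Complex.exp (-(B * u)) * Complex.exp (-(A * ((t - u : ℝ) : ℂ))) =
              Complex.exp (-(A * t)) * Complex.exp ((A - B) * u) := by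
            rw [← Complex.exp_add, ← Complex.exp_add]
            congr 1
            push_cast
            ring
          push_cast at this ⊢
          linear_combination ((u : ℂ) ^ ((a : ℂ) - 1) * ((t : ℂ) - u) ^ ((b : ℂ) - 1)) * this
      _ = _ := by
          rw [intervalIntegral.integral_const_mul, e]
          ring
  rw [setIntegral_congr_fun measurableSet_Ioi key, integral_const_mul] at h
  have ga := Gamma_ofReal_ne_zero ha
  have gb := Gamma_ofReal_ne_zero hb
  have gab : Complex.Gamma ((a : ℂ) + b) ≠ 0 := by
    simpa using Gamma_ofReal_ne_zero (add_pos ha hb)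
  refine mul_left_cancel₀ (div_ne_zero (mul_ne_zero ga gb) gab) (h.trans ?_)
  field_simp

/-- Rescaling of the principal power: `Re A > 0` keeps `A` off the branch cut. -/
lemma half_cpow_neg {A : ℂ} (hA : 0 < A.re) (s : ℝ) :
    (A / 2) ^ (-(s : ℂ)) = (((2 : ℝ) ^ s : ℝ) : ℂ) * (1 / A) ^ (s : ℂ) := by
  have harg : A.arg ≠ Real.pi := fun h => by
    have := (Complex.arg_eq_pi_iff.1 h).1
    linarith
  have hA0 : A ≠ 0 := by rintro rfl; simp at hA
  have hmul : ((((2 : ℝ)⁻¹ : ℝ) : ℂ) * A) ^ (-(s : ℂ)) =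
      (((2 : ℝ)⁻¹ : ℝ) : ℂ) ^ (-(s : ℂ)) * A ^ (-(s : ℂ)) := by
    have h2 : (((2 : ℝ)⁻¹ : ℝ) : ℂ) ≠ 0 := by norm_num
    rw [Complex.cpow_def_of_ne_zero (mul_ne_zero h2 hA0), Complex.cpow_def_of_ne_zero h2,
      Complex.cpow_def_of_ne_zero hA0, Complex.log_ofReal_mul (by norm_num) hA0,
      Complex.ofReal_log (by norm_num), add_mul, Complex.exp_add]
  rw [show A / 2 = (((2 : ℝ)⁻¹ : ℝ) : ℂ) * A by push_cast; ring, hmul, one_div,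
    Complex.inv_cpow _ _ harg, Complex.cpow_neg A, ← Complex.ofReal_neg,
    ← Complex.ofReal_cpow (by norm_num), Real.inv_rpow (by norm_num),
    Real.rpow_neg (by norm_num), inv_inv]

/-- the Laplace-type integral of t^{λ'''−1} e^{it(w₂−conj z)}
₁F₁(λ'+l, λ'+λ''+2l; −i(w₂−w₁)t) evaluates to
((λ'''−1)/(4π)) ((w₁−conj z)/(2i))^{−(λ'+l)} ((w₂−conj z)/(2i))^{−(λ''+l)}. -/
theorem laplace_kummer_relative_kernel (lam' lam'' lam''' : ℝ)
    (h' : 1 < lam') (h'' : 1 < lam'') (h''' : 1 < lam''') (l : ℕ)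
    (hl : lam''' = lam' + lam'' + 2 * l)
    (w₁ w₂ z : ℂ) (hw₁ : w₁ ∈ UHP) (hw₂ : w₂ ∈ UHP) (hz : z ∈ UHP) :
    ∫ t in Set.Ioi (0 : ℝ),
        (((2 : ℝ) ^ (lam''' - 1) / (2 * Real.pi * Real.Gamma (lam''' - 1)) : ℝ) : ℂ) *
          ((t ^ (lam''' - 1) : ℝ) : ℂ) * Complex.exp (I * t * (w₂ - conj z)) *
          kummer (lam' + l) (lam' + lam'' + 2 * l) (-I * (w₂ - w₁) * t) =
      (((lam''' - 1) / (4 * Real.pi) : ℝ) : ℂ) *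
        ((w₁ - conj z) / (2 * I)) ^ (-((lam' : ℂ) + l)) *
        ((w₂ - conj z) / (2 * I)) ^ (-((lam'' : ℂ) + l)) := by
  have ha : 0 < lam' + l := by positivity
  have hb : 0 < lam'' + l := by positivity
  have hA : 0 < (-I * (w₂ - conj z)).re := by
    have h2 : 0 < w₂.im := hw₂
    have h3 : 0 < z.im := hz
    simpa using add_pos h2 h3
  have hB : 0 < (-I * (w₁ - conj z)).re := by
    have h2 : 0 < w₁.im := hw₁
    have h3 : 0 < z.im := hz
    simpa using add_pos h2 h3
  have main := laplace_kummer ha hb hA hB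
  have eA : (w₂ - conj z) / (2 * I) = (-I * (w₂ - conj z)) / 2 := by
    rw [← div_div, div_right_comm, Complex.div_I]
    ring
  have eB : (w₁ - conj z) / (2 * I) = (-I * (w₁ - conj z)) / 2 := by
    rw [← div_div, div_right_comm, Complex.div_I]
    ring
  have ea : -((lam' : ℂ) + l) = -((lam' + l : ℝ) : ℂ) := by push_cast; ring
  have eb : -((lam'' : ℂ) + l) = -((lam'' + l : ℝ) : ℂ) := by push_cast; ring
  have hc : lam''' = (lam' + l) + (lam'' + l) := by rw [hl]; ring
  have hint : ∀ t ∈ Set.Ioi (0 : ℝ),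
      (((2 : ℝ) ^ (lam''' - 1) / (2 * Real.pi * Real.Gamma (lam''' - 1)) : ℝ) : ℂ) *
          ((t ^ (lam''' - 1) : ℝ) : ℂ) * Complex.exp (I * t * (w₂ - conj z)) *
          kummer (lam' + l) (lam' + lam'' + 2 * l) (-I * (w₂ - w₁) * t) =
      (((2 : ℝ) ^ (lam''' - 1) / (2 * Real.pi * Real.Gamma (lam''' - 1)) : ℝ) : ℂ) *
        ((t : ℂ) ^ (((lam' + l : ℝ) : ℂ) + ((lam'' + l : ℝ) : ℂ) - 1) *
          Complex.exp (-(-I * (w₂ - conj z) * t)) *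
          kummer (lam' + l) ((lam' + l) + (lam'' + l))
            ((-I * (w₂ - conj z) - -I * (w₁ - conj z)) * t)) := by
    intro t ht
    rw [Complex.ofReal_cpow (le_of_lt ht), ← hl, ← hc,
      show -I * (w₂ - conj z) - -I * (w₁ - conj z) = -I * (w₂ - w₁) by ring,
      show -(-I * (w₂ - conj z) * t) = I * t * (w₂ - conj z) by ring,
      show ((lam' + l : ℝ) : ℂ) + ((lam'' + l : ℝ) : ℂ) - 1 = ((lam''' - 1 : ℝ) : ℂ) by
        rw [hc]; push_cast; ring]
    ring
  rw [setIntegral_congr_fun measurableSet_Ioi hint, integral_const_mul, main, eA, eB, ea, eb,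
    half_cpow_neg hA, half_cpow_neg hB]
  have hG : Real.Gamma (lam''' - 1) ≠ 0 := (Real.Gamma_pos_of_pos (by linarith)).ne'
  have hGs : Real.Gamma lam''' = (lam''' - 1) * Real.Gamma (lam''' - 1) := by
    have := Real.Gamma_add_one (s := lam''' - 1) (by linarith)
    rwa [sub_add_cancel] at this
  have h2 : (2 : ℝ) ^ (lam' + l) * (2 : ℝ) ^ (lam'' + l) = 2 * (2 : ℝ) ^ (lam''' - 1) := by
    rw [← Real.rpow_add (by norm_num), ← hc, Real.rpow_sub_one (by norm_num)]
    ring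
  have hconst : (2 : ℝ) ^ (lam''' - 1) / (2 * Real.pi * Real.Gamma (lam''' - 1)) *
      Real.Gamma lam''' =
      (lam''' - 1) / (4 * Real.pi) * ((2 : ℝ) ^ (lam' + l) * (2 : ℝ) ^ (lam'' + l)) := by
    rw [h2, hGs]
    field_simp
    ring
  have hconstC := congrArg (fun r : ℝ => (r : ℂ)) hconst
  simp only [Complex.ofReal_mul] at hconstC
  rw [show ((lam' + l : ℝ) : ℂ) + ((lam'' + l : ℝ) : ℂ) = (lam''' : ℂ) by
    rw [hc]; push_cast; ring, Complex.Gamma_ofReal]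
  linear_combination ((1 / (-I * (w₁ - conj z))) ^ ((lam' + l : ℝ) : ℂ) *
    (1 / (-I * (w₂ - conj z))) ^ ((lam'' + l : ℝ) : ℂ)) * hconstC
end
end

section
/- Let λ', λ'', λ''' be real numbers > 1 with l := (λ''' − λ' − λ'')/2 a nonnegative integer. Then for all z, w₁, w₂ ∈ Π: Ψ_{λ',λ''}^{λ'''}(K_{λ'''}(·,z))(w₁,w₂) = ((−1)^l (λ'''−1) B(λ'+l, λ''+l) / (4π l!)) · K_{λ',λ''}^{λ'''}(z,w₁,w₂), i.e. ((w₁−w₂)^l/(2^{λ'+λ''+2l−1} l!)) ∫_{−1}^{1} K_{λ'''}(w(v), z) (1−v)^{λ'+l−1}(1+v)^{λ''+l−1} dv equals the right-hand side, where w(v) = ((w₂−w₁)v + (w₂+w₁))/2. -/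
/-!
Writing `A = (w₁ - conj z) / (2 * I)` and `B = (w₂ - conj z) / (2 * I)`, both in the right
half-plane, and substituting `v = 2 * t - 1`, the claim becomes Feynman's parametrisation
(`feynman_param`)
`∫₀¹ (1 - t) ^ (a - 1) * t ^ (b - 1) * ((1 - t) * A + t * B) ^ (-(a + b)) dt = Beta(a, b) * A ^ (-a) * B ^ (-b)`
with `a = λ' + l` and `b = λ'' + l`.

For fixed `A`, let `J B` be the left-hand side. Differentiating under the integral sign
(`hasDerivAt_segment_integral`) and integrating by parts (`integral_parts`) gives
`B * J' B = -b * J B`, so `J B * B ^ b` is constant on the right half-plane. At `B = A` the power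
leaves the integral and the classical Beta integral remains, which determines the constant.
-/


open ComplexConjugate MeasureTheory
open Complex (I)

noncomputable section

/-- The holographic operator Ψ_{λ',λ''}^{λ'''} (with l = (λ'''−λ'−λ'')/2):
Ψ(g)(w₁,w₂) = ((w₁−w₂)^l/(2^{λ'+λ''+2l−1} l!)) ∫_{−1}^{1} g(w(v)) (1−v)^{λ'+l−1}(1+v)^{λ''+l−1} dv,
where w(v) = ((w₂−w₁)v + (w₂+w₁))/2. -/
def Psi (lam' lam'' : ℝ) (l : ℕ) (g : ℂ → ℂ) (w₁ w₂ : ℂ) : ℂ :=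
  (w₁ - w₂) ^ l / ((((2 : ℝ) ^ (lam' + lam'' + 2 * l - 1) : ℝ) : ℂ) * (l.factorial : ℂ)) *
    ∫ v in Set.Ioo (-1 : ℝ) 1,
      g (((w₂ - w₁) * v + (w₂ + w₁)) / 2) *
        (((1 - v) ^ (lam' + l - 1) * (1 + v) ^ (lam'' + l - 1) : ℝ) : ℂ)

/-- The relative reproducing kernel. -/
def relK (lam' lam'' : ℝ) (l : ℕ) (z w₁ w₂ : ℂ) : ℂ :=
  (w₂ - w₁) ^ l * ((w₁ - conj z) / (2 * I)) ^ (-((lam' : ℂ) + l)) *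
    ((w₂ - conj z) / (2 * I)) ^ (-((lam'' : ℂ) + l))

/-- Euler beta function B(x,y) = Γ(x)Γ(y)/Γ(x+y). -/
def eulerBeta (x y : ℝ) : ℝ := Real.Gamma x * Real.Gamma y / Real.Gamma (x + y)

/-- The segment joining two points of the right half-plane stays in the right half-plane. -/
lemma re_segment_pos {A B : ℂ} (hA : 0 < A.re) (hB : 0 < B.re) {t : ℝ} (ht : t ∈ Set.Icc (0 : ℝ) 1) :
    0 < ((1 - t) * A + t * B : ℂ).re := by
  have h : ((1 - t) * A + t * B : ℂ).re = (1 - t) * A.re + t * B.re := by simp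
  rw [h]
  rcases ht.1.eq_or_lt with h0 | h0
  · simpa [← h0] using hA
  · exact add_pos_of_nonneg_of_pos (mul_nonneg (by linarith [ht.2]) hA.le) (mul_pos h0 hB)

lemma mem_slitPlane_of_re_pos {A : ℂ} (hA : 0 < A.re) : A ∈ Complex.slitPlane :=
  Complex.mem_slitPlane_iff.2 (Or.inl hA)

lemma continuousOn_segment_cpow {A B : ℂ} (hA : 0 < A.re) (hB : 0 < B.re) (c : ℂ) :
    ContinuousOn (fun t : ℝ => ((1 - t) * A + t * B : ℂ) ^ c) (Set.Icc 0 1) :=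
  ContinuousOn.cpow_const (by fun_prop)
    fun _ ht => mem_slitPlane_of_re_pos (re_segment_pos hA hB ht)

/-- Differentiation under the integral sign with respect to the endpoint `B`. -/
lemma hasDerivAt_segment_integral {A B : ℂ} (hA : 0 < A.re) (hB : 0 < B.re) (s : ℂ)
    {w : ℝ → ℂ} (hw : Continuous w) :
    HasDerivAt (fun B : ℂ => ∫ t in (0 : ℝ)..1, w t * ((1 - t) * A + t * B : ℂ) ^ (-s))
      (∫ t in (0 : ℝ)..1, w t * (-s * ((1 - t) * A + t * B : ℂ) ^ (-s - 1) * t)) B := by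
  have hU : Set.uIcc (0 : ℝ) 1 = Set.Icc 0 1 := Set.uIcc_of_le zero_le_one
  have hopen : IsOpen {z : ℂ | 0 < z.re} := isOpen_lt continuous_const Complex.continuous_re
  obtain ⟨r, hr, hball⟩ := Metric.nhds_basis_closedBall.mem_iff.1 (hopen.mem_nhds hB)
  have hF : ∀ B : ℂ, 0 < B.re →
      ContinuousOn (fun t : ℝ => w t * ((1 - t) * A + t * B : ℂ) ^ (-s)) (Set.Icc 0 1) :=
    fun B hB => hw.continuousOn.mul (continuousOn_segment_cpow hA hB _)
  have hF' : ContinuousOn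
      (fun t : ℝ => w t * (-s * ((1 - t) * A + t * B : ℂ) ^ (-s - 1) * t)) (Set.Icc 0 1) :=
    hw.continuousOn.mul ((continuousOn_const.mul (continuousOn_segment_cpow hA hB _)).mul
      (by fun_prop))
  have hmeas : ∀ {f : ℝ → ℂ}, ContinuousOn f (Set.Icc 0 1) →
      AEStronglyMeasurable f (volume.restrict (Set.uIoc 0 1)) := fun hf =>
    ((hf.mono (by rw [← hU]; exact Set.uIoc_subset_uIcc)).aestronglyMeasurable
      measurableSet_uIoc)
  -- the derivative is jointly continuous, hence bounded on a compact neighbourhood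
  obtain ⟨C, hC⟩ := ((isCompact_closedBall B r).prod
      (isCompact_Icc (a := (0 : ℝ)) (b := 1))).exists_bound_of_continuousOn
    (f := fun p : ℂ × ℝ =>
      w p.2 * (-s * ((1 - p.2) * A + p.2 * p.1 : ℂ) ^ (-s - 1) * p.2)) (by
      refine ContinuousOn.mul (by fun_prop) ((continuousOn_const.mul ?_).mul (by fun_prop))
      exact ContinuousOn.cpow_const (by fun_prop)
        fun p hp => mem_slitPlane_of_re_pos (re_segment_pos hA (hball hp.1) hp.2))
  have hsub : ∀ t : ℝ, t ∈ Set.uIoc (0 : ℝ) 1 → t ∈ Set.Icc (0 : ℝ) 1 := fun t ht => by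
    rw [← hU]; exact Set.uIoc_subset_uIcc ht
  refine (intervalIntegral.hasDerivAt_integral_of_dominated_loc_of_deriv_le
    (𝕜 := ℂ) (bound := fun _ => C) (Metric.closedBall_mem_nhds B hr)
    (Filter.mem_of_superset (Metric.closedBall_mem_nhds B hr) fun B' hB' =>
      hmeas (hF B' (hball hB')))
    (ContinuousOn.intervalIntegrable (by rw [hU]; exact hF B hB)) (hmeas hF')
    (Filter.Eventually.of_forall fun t ht x hx => hC (x, t) ⟨hx, hsub t ht⟩)
    intervalIntegrable_const
    (Filter.Eventually.of_forall fun t ht x hx => ?_)).2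
  have hlin : HasDerivAt (fun x : ℂ => ((1 - t) * A + t * x : ℂ)) t x := by
    simpa using ((hasDerivAt_id x).const_mul (t : ℂ)).const_add ((1 - t) * A : ℂ)
  exact (hlin.cpow_const
    (mem_slitPlane_of_re_pos (re_segment_pos hA (hball hx) (hsub t ht)))).const_mul (w t)

/-- The weight `(1 - t) ^ (a - 1) * t ^ (b - 1)` of the Beta integral, as a complex number. -/
def betaWeight (a b : ℝ) (t : ℝ) : ℂ := (((1 - t) ^ (a - 1) * t ^ (b - 1) : ℝ) : ℂ)

lemma continuous_betaWeight {a b : ℝ} (ha : 1 < a) (hb : 1 < b) :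
    Continuous (betaWeight a b) := by
  refine Complex.continuous_ofReal.comp (Continuous.mul ?_ ?_)
  · exact (continuous_const.sub continuous_id).rpow_const fun _ => Or.inr (by linarith)
  · exact continuous_id.rpow_const fun _ => Or.inr (by linarith)

lemma integral_betaWeight {a b : ℝ} (ha : 1 < a) (hb : 1 < b) :
    ∫ t in (0 : ℝ)..1, betaWeight a b t = (eulerBeta a b : ℂ) := by
  have h1 : ∫ t in (0 : ℝ)..1, betaWeight a b t = Complex.betaIntegral b a := by
    refine intervalIntegral.integral_congr fun t ht => ?_
    rw [Set.uIcc_of_le zero_le_one] at ht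
    have h1t : (0 : ℝ) ≤ 1 - t := by linarith [ht.2]
    simp only [betaWeight]
    push_cast [Complex.ofReal_cpow ht.1, Complex.ofReal_cpow h1t]
    ring
  rw [h1, Complex.betaIntegral_eq_Gamma_mul_div _ _ (by simp; linarith) (by simp; linarith)]
  simp only [eulerBeta]
  push_cast [← Complex.Gamma_ofReal]
  rw [mul_comm, add_comm]

/-- Integrating the derivative of `(1 - t) ^ a * t ^ b * ((1 - t) * A + t * B) ^ (-(a + b))`,
which vanishes at both endpoints, gives the first-order equation in `B` behind the identity. -/
lemma integral_parts {a b : ℝ} (ha : 1 < a) (hb : 1 < b) {A B : ℂ}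
    (hA : 0 < A.re) (hB : 0 < B.re) :
    B * (∫ t in (0 : ℝ)..1, betaWeight a b t *
        (-((a : ℂ) + b) * ((1 - t) * A + t * B : ℂ) ^ (-((a : ℂ) + b) - 1) * t)) =
      -(b * ∫ t in (0 : ℝ)..1, betaWeight a b t * ((1 - t) * A + t * B : ℂ) ^ (-((a : ℂ) + b))) := by
  have hU : Set.uIcc (0 : ℝ) 1 = Set.Icc 0 1 := Set.uIcc_of_le zero_le_one
  set s : ℂ := (a : ℂ) + b with hs
  have hw := continuous_betaWeight ha hb
  have c1 : ContinuousOn (fun t : ℝ => betaWeight a b t *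
      (-s * ((1 - t) * A + t * B : ℂ) ^ (-s - 1) * t)) (Set.Icc 0 1) :=
    hw.continuousOn.mul ((continuousOn_const.mul (continuousOn_segment_cpow hA hB _)).mul
      (by fun_prop))
  have c2 : ContinuousOn (fun t : ℝ => betaWeight a b t * ((1 - t) * A + t * B : ℂ) ^ (-s))
      (Set.Icc 0 1) := hw.continuousOn.mul (continuousOn_segment_cpow hA hB _)
  have i1 := (hU ▸ c1 : ContinuousOn _ (Set.uIcc (0 : ℝ) 1)).intervalIntegrable (μ := volume)
  have i2 := (hU ▸ c2 : ContinuousOn _ (Set.uIcc (0 : ℝ) 1)).intervalIntegrable (μ := volume)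
  have key := intervalIntegral.integral_eq_sub_of_hasDerivAt_of_le (a := 0) (b := 1)
    (f := fun t : ℝ => (((1 - t) ^ a : ℝ) : ℂ) * ((t ^ b : ℝ) : ℂ) *
      ((1 - t) * A + t * B : ℂ) ^ (-s)) zero_le_one
    (by
      refine ContinuousOn.mul (Continuous.continuousOn ?_) (continuousOn_segment_cpow hA hB _)
      refine (Complex.continuous_ofReal.comp ?_).mul (Complex.continuous_ofReal.comp ?_)
      · exact (continuous_const.sub continuous_id).rpow_const fun _ => Or.inr (by linarith)
      · exact continuous_id.rpow_const fun _ => Or.inr (by linarith))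
    (fun t ht => ?_) ((i1.const_mul B).add (i2.const_mul (b : ℂ)))
  · rw [intervalIntegral.integral_add (i1.const_mul B) (i2.const_mul (b : ℂ)),
      intervalIntegral.integral_const_mul, intervalIntegral.integral_const_mul] at key
    have ha0 : a ≠ 0 := by linarith
    have hb0 : b ≠ 0 := by linarith
    simp only [sub_self, Real.zero_rpow ha0, Real.zero_rpow hb0, Complex.ofReal_zero, zero_mul,
      mul_zero] at key
    exact eq_neg_of_add_eq_zero_left key
  · have ht0 : t ≠ 0 := ht.1.ne'
    have ht1 : 1 - t ≠ 0 := by linarith [ht.2]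
    have hX := re_segment_pos hA hB ⟨ht.1.le, ht.2.le⟩
    have hX0 : ((1 - t) * A + t * B : ℂ) ≠ 0 := by
      intro h; rw [h] at hX; simp at hX
    have d1 : HasDerivAt (fun t : ℝ => (((1 - t) ^ a : ℝ) : ℂ))
        ((-1 * a * (1 - t) ^ (a - 1) : ℝ) : ℂ) t := by
      refine HasDerivAt.ofReal_comp ?_
      exact ((hasDerivAt_id t).const_sub 1).rpow_const (Or.inl ht1)
    have d2 : HasDerivAt (fun t : ℝ => ((t ^ b : ℝ) : ℂ))
        ((1 * b * t ^ (b - 1) : ℝ) : ℂ) t :=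
      HasDerivAt.ofReal_comp ((hasDerivAt_id t).rpow_const (Or.inl ht0))
    have dlin : HasDerivAt (fun t : ℂ => ((1 - t) * A + t * B : ℂ)) (B - A) t := by
      have := (((hasDerivAt_id (t : ℂ)).const_sub 1).mul_const A).add
        ((hasDerivAt_id (t : ℂ)).mul_const B)
      exact this.congr_deriv (by ring)
    have d3 : HasDerivAt (fun t : ℝ => ((1 - t) * A + t * B : ℂ) ^ (-s))
        (-s * ((1 - t) * A + t * B : ℂ) ^ (-s - 1) * (B - A)) t :=
      (dlin.cpow_const (c := -s) (mem_slitPlane_of_re_pos hX)).comp_ofReal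
    refine ((d1.mul d2).mul d3).congr_deriv ?_
    have e1 : (1 - t) ^ a = (1 - t) ^ (a - 1) * (1 - t) := by
      rw [Real.rpow_sub_one ht1]; field_simp
    have e2 : t ^ b = t ^ (b - 1) * t := by
      rw [Real.rpow_sub_one ht0]; field_simp
    have e3 : ((1 - t) * A + t * B : ℂ) ^ (-s) =
        ((1 - t) * A + t * B : ℂ) ^ (-s - 1) * ((1 - t) * A + t * B) := by
      rw [Complex.cpow_sub _ _ hX0, Complex.cpow_one]; field_simp
    simp only [betaWeight, Pi.mul_apply]
    rw [e1, e2, e3]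
    generalize ((1 - t) * A + t * B : ℂ) ^ (-s - 1) = P
    rw [hs]
    push_cast
    ring

/-- **Feynman's parametrisation** of `A ^ (-a) * B ^ (-b)` for `A`, `B` in the right half-plane. -/
lemma feynman_param {a b : ℝ} (ha : 1 < a) (hb : 1 < b) {A B : ℂ}
    (hA : 0 < A.re) (hB : 0 < B.re) :
    ∫ t in (0 : ℝ)..1, betaWeight a b t * ((1 - t) * A + t * B : ℂ) ^ (-((a : ℂ) + b)) =
      eulerBeta a b * (A ^ (-(a : ℂ)) * B ^ (-(b : ℂ))) := by
  set J : ℂ → ℂ := fun B =>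
    ∫ t in (0 : ℝ)..1, betaWeight a b t * ((1 - t) * A + t * B : ℂ) ^ (-((a : ℂ) + b)) with hJ
  have ne0 : ∀ {B : ℂ}, 0 < B.re → B ≠ 0 := fun h h0 => by simp [h0] at h
  have hder : ∀ B ∈ {z : ℂ | 0 < z.re}, HasDerivAt (fun B => J B * B ^ (b : ℂ)) 0 B := by
    intro B hB
    have h1 := (hasDerivAt_segment_integral hA hB ((a : ℂ) + b) (continuous_betaWeight ha hb)).mul
      ((hasDerivAt_id B).cpow_const (c := (b : ℂ)) (mem_slitPlane_of_re_pos hB))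
    refine h1.congr_deriv ?_
    have h2 := integral_parts ha hb hA hB
    simp only [id, Complex.cpow_sub _ _ (ne0 hB), Complex.cpow_one]
    have hB0 := ne0 hB
    generalize (∫ t in (0 : ℝ)..1, betaWeight a b t *
      (-((a : ℂ) + b) * ((1 - t) * A + t * B : ℂ) ^ (-((a : ℂ) + b) - 1) * t)) = J' at h2 ⊢
    generalize (∫ t in (0 : ℝ)..1, betaWeight a b t *
      ((1 - t) * A + t * B : ℂ) ^ (-((a : ℂ) + b))) = J₀ at h2 ⊢
    field_simp
    linear_combination (B ^ (b : ℂ)) * h2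
  have hconst : J B * B ^ (b : ℂ) = J A * A ^ (b : ℂ) :=
    (isOpen_lt continuous_const Complex.continuous_re).is_const_of_deriv_eq_zero
      (convex_halfSpace_re_gt 0).isPreconnected
      (fun x hx => (hder x hx).differentiableAt.differentiableWithinAt)
      (fun x hx => (hder x hx).deriv) hB hA
  have hJA : J A = eulerBeta a b * A ^ (-((a : ℂ) + b)) := by
    simp only [hJ, ← add_mul, sub_add_cancel, one_mul, intervalIntegral.integral_mul_const,
      integral_betaWeight ha hb]
  change J B = _
  have hBb : B ^ (b : ℂ) ≠ 0 := by simp [Complex.cpow_eq_zero_iff, ne0 hB]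
  refine mul_right_cancel₀ hBb ?_
  rw [hconst, hJA, neg_add, Complex.cpow_add _ _ (ne0 hA), Complex.cpow_neg A b,
    Complex.cpow_neg B b]
  have hAb : A ^ (b : ℂ) ≠ 0 := by simp [Complex.cpow_eq_zero_iff, ne0 hA]
  field_simp

/-- A point of `Π` minus a conjugate of a point of `Π`, divided by `2 * I`, lies in the right
half-plane. -/
lemma re_sub_conj_div_pos {w z : ℂ} (hw : w ∈ UHP) (hz : z ∈ UHP) :
    0 < ((w - conj z) / (2 * I)).re := by
  have h : ((w - conj z) / (2 * I)).re = (w.im + z.im) / 2 := by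
    have : (w - conj z) / (2 * I) = (w - conj z) * (-I) / (2 : ℝ) := by
      field_simp
      simp
    rw [this, Complex.div_ofReal_re]
    simp
  rw [h]
  have h1 : 0 < w.im := hw
  have h2 : 0 < z.im := hz
  linarith

/-- Ψ_{λ',λ''}^{λ'''}(K_{λ'''}(·,z)) =
((−1)^l (λ'''−1) B(λ'+l,λ''+l)/(4π l!)) · K_{λ',λ''}^{λ'''}(z,·,·). -/
theorem Psi_of_bergman_kernel (lam' lam'' lam''' : ℝ)
    (h' : 1 < lam') (h'' : 1 < lam'') (h''' : 1 < lam''') (l : ℕ)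
    (hl : lam''' = lam' + lam'' + 2 * l)
    (z w₁ w₂ : ℂ) (hz : z ∈ UHP) (hw₁ : w₁ ∈ UHP) (hw₂ : w₂ ∈ UHP) :
    Psi lam' lam'' l (fun u => bergmanK lam''' u z) w₁ w₂ =
      (-1 : ℂ) ^ l *
        (((lam''' - 1) * eulerBeta (lam' + l) (lam'' + l) /
          (4 * Real.pi * l.factorial) : ℝ) : ℂ) *
        relK lam' lam'' l z w₁ w₂ := by
  have hA := re_sub_conj_div_pos hw₁ hz
  have hB := re_sub_conj_div_pos hw₂ hz
  have hl0 : (0 : ℝ) ≤ l := Nat.cast_nonneg l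
  have ha : 1 < lam' + l := by linarith
  have hb : 1 < lam'' + l := by linarith
  have hF := feynman_param ha hb hA hB
  have hPsi : (∫ v in Set.Ioo (-1 : ℝ) 1,
      bergmanK lam''' (((w₂ - w₁) * v + (w₂ + w₁)) / 2) z *
        (((1 - v) ^ (lam' + l - 1) * (1 + v) ^ (lam'' + l - 1) : ℝ) : ℂ)) =
      (((2 : ℝ) ^ (lam' + lam'' + 2 * l - 1) : ℝ) : ℂ) * (((lam''' - 1) / (4 * Real.pi)) *
        ∫ t in (0 : ℝ)..1, betaWeight (lam' + l) (lam'' + l) t *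
          ((1 - t) * ((w₁ - conj z) / (2 * I)) + t * ((w₂ - conj z) / (2 * I)) : ℂ) ^
            (-(((lam' + l : ℝ) : ℂ) + ((lam'' + l : ℝ) : ℂ)))) := by
    rw [← integral_Ioc_eq_integral_Ioo,
      ← intervalIntegral.integral_of_le (by norm_num : (-1 : ℝ) ≤ 1)]
    have hsub := intervalIntegral.integral_comp_mul_add (a := 0) (b := 1) (c := 2)
      (fun v : ℝ => bergmanK lam''' (((w₂ - w₁) * v + (w₂ + w₁)) / 2) z *
        (((1 - v) ^ (lam' + l - 1) * (1 + v) ^ (lam'' + l - 1) : ℝ) : ℂ)) two_ne_zero (-1)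
    rw [eq_inv_smul_iff₀ two_ne_zero] at hsub
    norm_num only at hsub
    rw [← hsub, ← intervalIntegral.integral_smul, ← intervalIntegral.integral_const_mul,
      ← intervalIntegral.integral_const_mul]
    refine intervalIntegral.integral_congr fun t ht => ?_
    rw [Set.uIcc_of_le zero_le_one] at ht
    have h1t : (0 : ℝ) ≤ 1 - t := by linarith [ht.2]
    have e1 : (1 - (2 * t + -1)) ^ (lam' + l - 1) =
        (2 : ℝ) ^ (lam' + l - 1) * (1 - t) ^ (lam' + l - 1) := by
      rw [← Real.mul_rpow zero_le_two h1t]; ring_nf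
    have e2 : (1 + (2 * t + -1)) ^ (lam'' + l - 1) =
        (2 : ℝ) ^ (lam'' + l - 1) * t ^ (lam'' + l - 1) := by
      rw [← Real.mul_rpow zero_le_two ht.1]; ring_nf
    have e3 : (2 : ℝ) ^ (lam' + lam'' + 2 * l - 1) =
        2 * (2 ^ (lam' + l - 1) * 2 ^ (lam'' + l - 1)) := by
      rw [← Real.rpow_add two_pos, ← Real.rpow_one_add' zero_le_two (by linarith)]
      ring_nf
    have e4 : ((((w₂ - w₁) * ((2 * t + -1 : ℝ) : ℂ) + (w₂ + w₁)) / 2 - conj z) / (2 * I)) =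
        (1 - t) * ((w₁ - conj z) / (2 * I)) + t * ((w₂ - conj z) / (2 * I)) := by
      push_cast
      ring
    have e5 : -(((lam' + l : ℝ) : ℂ) + ((lam'' + l : ℝ) : ℂ)) = -(lam''' : ℂ) := by
      rw [hl]; push_cast; ring
    simp only [bergmanK, betaWeight, e1, e2, e3, e4, e5, Complex.real_smul]
    push_cast
    ring
  have h2 : (((2 : ℝ) ^ (lam' + lam'' + 2 * l - 1) : ℝ) : ℂ) ≠ 0 :=
    Complex.ofReal_ne_zero.2 (Real.rpow_pos_of_pos two_pos _).ne'
  have hfac : (l.factorial : ℂ) ≠ 0 := Nat.cast_ne_zero.2 l.factorial_ne_zero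
  have hpi : (Real.pi : ℂ) ≠ 0 := Complex.ofReal_ne_zero.2 Real.pi_ne_zero
  have hsign : (w₁ - w₂) ^ l = (-1) ^ l * (w₂ - w₁) ^ l := by
    rw [← mul_pow]; ring
  simp only [Psi, relK]
  rw [hPsi, hF, hsign]
  push_cast
  generalize ((w₁ - conj z) / (2 * I)) ^ (-((lam' : ℂ) + l)) = P
  generalize ((w₂ - conj z) / (2 * I)) ^ (-((lam'' : ℂ) + l)) = Q
  field_simp
end
end

section
/- Let λ', λ'', λ''' be real numbers > 1 with l := (λ''' − λ' − λ'')/2 a nonnegative integer. Let g : Π → ℂ be holomorphic with ∫_Π |g(x+iy)|² y^{λ'''−2} dx dy < ∞. Then for all w₁, w₂ ∈ Π: Ψ_{λ',λ''}^{λ'''}(g)(w₁,w₂) = ∫_Π g(z) · Ψ_{λ',λ''}^{λ'''}(K_{λ'''}(·,z))(w₁,w₂) · Im(z)^{λ'''−2} dA(z), where dA denotes Lebesgue measure on Π. -/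
/-!
The operator `Psi` integrates its argument over the segment joining `w₁` and `w₂`, so the identity
follows from the reproducing property `g w = ∫ g(z) K(w, z) (Im z)^(λ-2) dA(z)` (`reproducing`)
applied at each point `w` of the segment, once the segment integral and the area integral are
exchanged.

The reproducing property is proved by transporting the integral to the unit disc along the Cayley
map `cayley w` that sends `0` to `w`. There `K(w, z) (Im z)^(λ-2) dA(z)` becomes
`(λ-1)/π (1 - |ζ|²)^(λ-2) (1 - ζ)^(-λ) dA(ζ)` (`kernel_density`), so that the claim is the mean
value property of the holomorphic function `g(cayley w ζ) (1 - ζ)^(-λ)` against a radial weight of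
known total mass (`integral_ball_radial`, `integral_ball_weight`).

For the exchange (`integrable_double`), `|g K| ≤ |g|² + |K|²` and `∫ |K(w, z)|² (Im z)^(λ-2) dA(z)`
is a constant times `(Im w)^(-λ)`, which is bounded on the segment because the segment stays away
from the real axis.
-/

open ComplexConjugate MeasureTheory
open Complex (I)

noncomputable section

/-! ### The weighted mean value property on the unit disc -/

/-- The mean value property on the circle through `ζ`, applied to `u ↦ F (u * ζ)`, which is
holomorphic on the closed unit disc. -/
lemma integral_circle_average {F : ℂ → ℂ} (hF : DifferentiableOn ℂ F (Metric.ball 0 1))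
    {ζ : ℂ} (hζ : ζ ∈ Metric.ball (0 : ℂ) 1) :
    ∫ θ in Set.Ioc 0 (2 * Real.pi), F (circleMap 0 1 θ * ζ) = (2 * Real.pi : ℝ) • F 0 := by
  have hd : DifferentiableOn ℂ (fun u => F (u * ζ)) (Metric.closedBall 0 1) := by
    refine hF.comp (by fun_prop) ?_
    intro u hu
    simp only [Metric.mem_closedBall, dist_zero_right, Metric.mem_ball, norm_mul] at *
    nlinarith [norm_nonneg u, norm_nonneg ζ]
  have hcl : DiffContOnCl ℂ (fun u => F (u * ζ)) (Metric.ball 0 |1|) := by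
    apply DifferentiableOn.diffContOnCl
    rwa [abs_one, closure_ball _ one_ne_zero]
  have h := hcl.circleAverage
  rw [Real.circleAverage_def, intervalIntegral.integral_of_le Real.two_pi_pos.le] at h
  simp only [zero_mul] at h
  rw [← h, smul_smul, mul_inv_cancel₀ Real.two_pi_pos.ne', one_smul]

/-- A holomorphic function on the unit disc, integrated against a radial density, behaves like the
constant `F 0`. The integral is invariant under every rotation of the disc; averaging over all
rotations and exchanging the integrals reduces to the mean value property on circles. -/
lemma integral_ball_radial {F : ℂ → ℂ} (hF : DifferentiableOn ℂ F (Metric.ball 0 1)) (ρ : ℝ → ℝ)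
    (hi : IntegrableOn (fun ζ => (ρ ‖ζ‖ : ℂ) * F ζ) (Metric.ball 0 1)) :
    ∫ ζ in Metric.ball (0 : ℂ) 1, (ρ ‖ζ‖ : ℂ) * F ζ =
      ((∫ ζ in Metric.ball (0 : ℂ) 1, ρ ‖ζ‖ : ℝ) : ℂ) * F 0 := by
  set H : ℂ → ℂ := (Metric.ball (0 : ℂ) 1).indicator (fun ζ => (ρ ‖ζ‖ : ℂ) * F ζ) with hH
  have hHi : Integrable H := (integrable_indicator_iff measurableSet_ball).2 hi
  set μ : Measure ℝ := volume.restrict (Set.Ioc 0 (2 * Real.pi)) with hμ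
  have hmp : ∀ θ : ℝ, MeasurePreserving (fun z : ℂ => circleMap 0 1 θ * z) := by
    intro θ
    have := (rotation (Circle.exp θ)).measurePreserving
    convert this using 2
    simp [circleMap, rotation_apply]
  have hskew : MeasurePreserving (fun p : ℝ × ℂ => (p.1, circleMap 0 1 p.1 * p.2))
      (μ.prod volume) (μ.prod volume) := by
    refine (MeasurePreserving.id μ).skew_product (g := fun θ z => circleMap 0 1 θ * z) ?_ ?_
    · have : Continuous (Function.uncurry fun (θ : ℝ) (z : ℂ) => circleMap 0 1 θ * z) := by
        simp only [Function.uncurry_def, circleMap]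
        fun_prop
      exact this.measurable
    · exact Filter.Eventually.of_forall fun θ => (hmp θ).map_eq
  have hint : Integrable (Function.uncurry fun (θ : ℝ) (z : ℂ) => H (circleMap 0 1 θ * z))
      (μ.prod volume) :=
    hskew.integrable_comp_of_integrable (hHi.comp_snd μ)
  have hrot : ∀ θ : ℝ, ∫ z, H (circleMap 0 1 θ * z) = ∫ z, H z := by
    intro θ
    have := (rotation (Circle.exp θ)).measurePreserving.integral_comp
      (rotation (Circle.exp θ)).toHomeomorph.measurableEmbedding H
    rw [← this]
    congr 1
    ext z
    simp [circleMap, rotation_apply]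
  have hsw := integral_integral_swap hint
  simp only [hrot] at hsw
  have hinner : ∀ z : ℂ, ∫ θ, H (circleMap 0 1 θ * z) ∂μ =
      (2 * Real.pi : ℂ) * ((Metric.ball (0 : ℂ) 1).indicator (fun ζ => (ρ ‖ζ‖ : ℂ)) z * F 0) := by
    intro z
    by_cases hz : z ∈ Metric.ball (0 : ℂ) 1
    · have : ∀ θ : ℝ, H (circleMap 0 1 θ * z) = (ρ ‖z‖ : ℂ) * F (circleMap 0 1 θ * z) := by
        intro θ
        have : circleMap 0 1 θ * z ∈ Metric.ball (0 : ℂ) 1 := by simpa using hz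
        rw [hH, Set.indicator_of_mem this]
        simp
      simp only [this, Set.indicator_of_mem hz]
      rw [integral_const_mul, integral_circle_average hF hz]
      simp only [Complex.real_smul]
      push_cast
      ring
    · have : ∀ θ : ℝ, H (circleMap 0 1 θ * z) = 0 := by
        intro θ
        have : circleMap 0 1 θ * z ∉ Metric.ball (0 : ℂ) 1 := by simpa using hz
        rw [hH, Set.indicator_of_notMem this]
      simp [this, Set.indicator_of_notMem hz]
  simp only [hinner] at hsw
  rw [integral_const_mul, integral_mul_const, integral_indicator measurableSet_ball,
    integral_const, integral_indicator measurableSet_ball,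
    integral_complex_ofReal] at hsw
  have hm : μ.real Set.univ = 2 * Real.pi := by
    simp [hμ, Real.pi_pos.le]
  rw [hm, Complex.real_smul] at hsw
  push_cast at hsw
  exact mul_left_cancel₀ (by simp [Real.pi_ne_zero]) hsw

/-- The radial integral of the weight; its primitive is
`-(1 - r²)^(s+1) / (2 (s+1))`, and convergence at `r = 1` uses only that the integrand is
nonnegative. -/
lemma weight_aux {s : ℝ} (hs : -1 < s) :
    IntegrableOn (fun r : ℝ => r * (1 - r ^ 2) ^ s) (Set.Ioc 0 1) ∧
      ∫ r in Set.Ioc (0 : ℝ) 1, r * (1 - r ^ 2) ^ s = 1 / (2 * (s + 1)) := by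
  have hs1 : 0 < s + 1 := by linarith
  have hcont : ContinuousOn (fun r : ℝ => -(1 - r ^ 2) ^ (s + 1) / (2 * (s + 1)))
      (Set.Icc 0 1) := by
    apply Continuous.continuousOn
    have : Continuous fun r : ℝ => (1 - r ^ 2) ^ (s + 1) :=
      Continuous.rpow_const (by fun_prop) fun _ => Or.inr hs1.le
    fun_prop
  have hder : ∀ r ∈ Set.Ioo (0 : ℝ) 1,
      HasDerivAt (fun r : ℝ => -(1 - r ^ 2) ^ (s + 1) / (2 * (s + 1)))
        (r * (1 - r ^ 2) ^ s) r := by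
    intro r hr
    have hpos : 0 < 1 - r ^ 2 := by nlinarith [hr.1, hr.2]
    have h1 : HasDerivAt (fun r : ℝ => 1 - r ^ 2) (-(2 * r)) r := by
      simpa using (hasDerivAt_pow 2 r).const_sub 1
    have h2 := ((h1.rpow_const (p := s + 1) (Or.inl hpos.ne')).neg).div_const (2 * (s + 1))
    refine h2.congr_deriv ?_
    rw [add_sub_cancel_right]
    field_simp
  have hint := intervalIntegral.integrableOn_deriv_of_nonneg hcont hder (by
    intro r hr
    have hpos : 0 < 1 - r ^ 2 := by nlinarith [hr.1, hr.2]
    have := hr.1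
    positivity)
  refine ⟨hint, ?_⟩
  rw [← intervalIntegral.integral_of_le zero_le_one,
    intervalIntegral.integral_eq_sub_of_hasDerivAt_of_le zero_le_one hcont hder
      ((intervalIntegrable_iff_integrableOn_Ioc_of_le zero_le_one).2 hint)]
  simp [Real.zero_rpow hs1.ne', neg_div]

lemma integrableOn_ball_weight {s : ℝ} (hs : -1 < s) :
    IntegrableOn (fun ζ : ℂ => (1 - ‖ζ‖ ^ 2) ^ s) (Metric.ball 0 1) := by
  refine (integrableOn_fun_norm_addHaar volume (f := fun r : ℝ => (1 - r ^ 2) ^ s)).2 ?_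
  simpa using (weight_aux hs).1.mono_set Set.Ioo_subset_Ioc_self

lemma integral_ball_weight {s : ℝ} (hs : -1 < s) :
    ∫ ζ in Metric.ball (0 : ℂ) 1, (1 - ‖ζ‖ ^ 2) ^ s = Real.pi / (s + 1) := by
  have h := integral_fun_norm_addHaar (volume : Measure ℂ)
    ((Set.Iio 1).indicator fun r : ℝ => (1 - r ^ 2) ^ s)
  have h1 : ∀ x : ℂ, (Set.Iio 1).indicator (fun r : ℝ => (1 - r ^ 2) ^ s) ‖x‖ =
      (Metric.ball (0 : ℂ) 1).indicator (fun ζ : ℂ => (1 - ‖ζ‖ ^ 2) ^ s) x := by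
    intro x
    simp [Set.indicator]
  simp only [h1] at h
  rw [integral_indicator measurableSet_ball] at h
  rw [h]
  have h2 : ∫ y in Set.Ioi (0 : ℝ), y ^ (Module.finrank ℝ ℂ - 1) •
      (Set.Iio 1).indicator (fun r : ℝ => (1 - r ^ 2) ^ s) y = 1 / (2 * (s + 1)) := by
    rw [← (weight_aux hs).2, integral_Ioc_eq_integral_Ioo, ← Set.Ioi_inter_Iio,
      ← setIntegral_indicator measurableSet_Iio]
    congr 1
    ext y
    by_cases hy : y < 1 <;> simp [hy]
  have hs1 : s + 1 ≠ 0 := by linarith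
  rw [h2]
  simp [Measure.real, Complex.volume_ball]
  field_simp

/-! ### The Cayley transform centred at a point of the half-plane -/

/-- The biholomorphic map from the unit disc onto the upper half-plane that sends `0` to `w`. -/
def cayley (w ζ : ℂ) : ℂ := (w - conj w * ζ) / (1 - ζ)

lemma re_one_sub_pos {ζ : ℂ} (hζ : ζ ∈ Metric.ball (0 : ℂ) 1) : 0 < (1 - ζ).re := by
  have h := Complex.re_le_norm ζ
  simp only [Metric.mem_ball, dist_zero_right] at hζ
  simp only [Complex.sub_re, Complex.one_re]
  linarith

lemma one_sub_ne_zero {ζ : ℂ} (hζ : ζ ∈ Metric.ball (0 : ℂ) 1) : 1 - ζ ≠ 0 := by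
  intro h
  have := re_one_sub_pos hζ
  simp [h] at this

lemma sub_conj_ne_zero {w z : ℂ} (hw : w ∈ UHP) (hz : z ∈ UHP) : w - conj z ≠ 0 := by
  intro h
  have := congrArg Complex.im h
  simp only [Complex.sub_im, Complex.conj_im, Complex.zero_im] at this
  simp only [UHP, Set.mem_ofPred_eq] at hw hz
  linarith

lemma im_cayley (w : ℂ) (ζ : ℂ) :
    (cayley w ζ).im = w.im * (1 - ‖ζ‖ ^ 2) / ‖1 - ζ‖ ^ 2 := by
  rw [cayley, Complex.div_im, ← Complex.normSq_eq_norm_sq, ← Complex.normSq_eq_norm_sq,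
    ← sub_div]
  congr 1
  simp [Complex.normSq_apply]
  ring

lemma cayley_mem {w ζ : ℂ} (hw : w ∈ UHP) (hζ : ζ ∈ Metric.ball (0 : ℂ) 1) :
    cayley w ζ ∈ UHP := by
  have h1 : 0 < ‖1 - ζ‖ := norm_pos_iff.2 (one_sub_ne_zero hζ)
  simp only [UHP, Set.mem_ofPred_eq, im_cayley] at *
  simp only [Metric.mem_ball, dist_zero_right] at hζ
  have h2 : 0 < 1 - ‖ζ‖ ^ 2 := by nlinarith [norm_nonneg ζ]
  positivity

lemma cayley_leftInv {w ζ : ℂ} (hw : w ∈ UHP) (hζ : ζ ∈ Metric.ball (0 : ℂ) 1) :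
    (cayley w ζ - w) / (cayley w ζ - conj w) = ζ := by
  have h1 := one_sub_ne_zero hζ
  have h2 := sub_conj_ne_zero hw hw
  have e1 : cayley w ζ - w = ζ * (w - conj w) / (1 - ζ) := by
    rw [cayley]; field_simp; ring
  have e2 : cayley w ζ - conj w = (w - conj w) / (1 - ζ) := by
    rw [cayley]; field_simp; ring
  rw [e1, e2]
  field_simp

lemma cayley_image {w : ℂ} (hw : w ∈ UHP) : cayley w '' Metric.ball 0 1 = UHP := by
  apply Set.Subset.antisymm
  · rintro _ ⟨ζ, hζ, rfl⟩
    exact cayley_mem hw hζ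
  · intro z hz
    have h1 := sub_conj_ne_zero hz hw
    have h2 := sub_conj_ne_zero hw hw
    refine ⟨(z - w) / (z - conj w), ?_, ?_⟩
    · simp only [Metric.mem_ball, dist_zero_right, norm_div]
      rw [div_lt_one (norm_pos_iff.2 h1), ← sq_lt_sq₀ (norm_nonneg _) (norm_nonneg _),
        ← Complex.normSq_eq_norm_sq, ← Complex.normSq_eq_norm_sq]
      simp only [UHP, Set.mem_ofPred_eq] at hw hz
      simp only [Complex.normSq_apply, Complex.sub_re, Complex.sub_im, Complex.conj_re,
        Complex.conj_im]
      nlinarith [mul_pos hw hz]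
    · have e : 1 - (z - w) / (z - conj w) = (w - conj w) / (z - conj w) := by
        field_simp; ring
      rw [cayley, e]
      field_simp
      ring

lemma cayley_hasDerivAt {w ζ : ℂ} (hζ : ζ ∈ Metric.ball (0 : ℂ) 1) :
    HasDerivAt (cayley w) ((w - conj w) / (1 - ζ) ^ 2) ζ := by
  have h1 := one_sub_ne_zero hζ
  have ha : HasDerivAt (fun ζ => w - conj w * ζ) (-conj w) ζ := by
    simpa using ((hasDerivAt_id ζ).const_mul (conj w)).const_sub w
  have hb : HasDerivAt (fun ζ : ℂ => 1 - ζ) (-1) ζ := by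
    simpa using (hasDerivAt_id ζ).const_sub 1
  refine (ha.div hb h1).congr_deriv ?_
  field_simp
  ring

/-- The differential of `cayley w` at `ζ`, as a real-linear map. -/
def cayleyD (w ζ : ℂ) : ℂ →L[ℝ] ℂ :=
  (ContinuousLinearMap.toSpanSingleton ℂ ((w - conj w) / (1 - ζ) ^ 2)).restrictScalars ℝ

lemma abs_det_cayleyD (w ζ : ℂ) :
    |(cayleyD w ζ).det| = 4 * w.im ^ 2 / ‖1 - ζ‖ ^ 4 := by
  have h : (cayleyD w ζ).det = Complex.normSq ((w - conj w) / (1 - ζ) ^ 2) := by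
    simp [cayleyD, ContinuousLinearMap.det, LinearMap.det_restrictScalars,
      Algebra.norm_complex_eq]
  rw [h, abs_of_nonneg (Complex.normSq_nonneg _), Complex.normSq_eq_norm_sq, norm_div,
    Complex.sub_conj, norm_pow]
  simp
  rw [div_pow, mul_pow, sq_abs]
  ring

lemma cayley_hasFDeriv (w : ℂ) : ∀ ζ ∈ Metric.ball (0 : ℂ) 1,
    HasFDerivWithinAt (cayley w) (cayleyD w ζ) (Metric.ball 0 1) ζ := fun _ hζ =>
  ((cayley_hasDerivAt hζ).hasFDerivAt.restrictScalars ℝ).hasFDerivWithinAt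

lemma cayley_injOn {w : ℂ} (hw : w ∈ UHP) : Set.InjOn (cayley w) (Metric.ball 0 1) := by
  intro a ha b hb h
  rw [← cayley_leftInv hw ha, ← cayley_leftInv hw hb, h]

lemma integrableOn_UHP_iff {E : Type*} [NormedAddCommGroup E] [NormedSpace ℝ E] {w : ℂ}
    (hw : w ∈ UHP) (f : ℂ → E) :
    IntegrableOn f UHP ↔ IntegrableOn
      (fun ζ => (4 * w.im ^ 2 / ‖1 - ζ‖ ^ 4) • f (cayley w ζ)) (Metric.ball 0 1) := by
  have := integrableOn_image_iff_integrableOn_abs_det_fderiv_smul volume measurableSet_ball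
    (cayley_hasFDeriv w) (cayley_injOn hw) f
  rw [cayley_image hw] at this
  simpa only [abs_det_cayleyD] using this

lemma integral_UHP_eq {E : Type*} [NormedAddCommGroup E] [NormedSpace ℝ E] {w : ℂ}
    (hw : w ∈ UHP) (f : ℂ → E) :
    ∫ z in UHP, f z =
      ∫ ζ in Metric.ball (0 : ℂ) 1, (4 * w.im ^ 2 / ‖1 - ζ‖ ^ 4) • f (cayley w ζ) := by
  have := integral_image_eq_integral_abs_det_fderiv_smul volume measurableSet_ball
    (cayley_hasFDeriv w) (cayley_injOn hw) f
  rw [cayley_image hw] at this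
  simpa only [abs_det_cayleyD] using this

/-! ### The Bergman kernel in Cayley coordinates -/

lemma kernel_arg {w ζ : ℂ} (hζ : ζ ∈ Metric.ball (0 : ℂ) 1) :
    (w - conj (cayley w ζ)) / (2 * I) = (w.im : ℂ) * (conj (1 - ζ))⁻¹ := by
  have h1 : conj (1 - ζ) ≠ 0 := (map_ne_zero _).2 (one_sub_ne_zero hζ)
  have h2 : (w.im : ℂ) = (w - conj w) / (2 * I) := by
    rw [Complex.sub_conj]
    field_simp
    push_cast
    ring
  rw [h2, cayley]
  simp only [map_div₀, map_sub, map_mul, Complex.conj_conj, map_one] at *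
  field_simp
  ring

lemma bergmanK_cayley (lam : ℝ) {w ζ : ℂ} (hw : w ∈ UHP) (hζ : ζ ∈ Metric.ball (0 : ℂ) 1) :
    bergmanK lam w (cayley w ζ) =
      ((lam - 1) / (4 * Real.pi)) * (((w.im ^ (-lam) : ℝ) : ℂ) * conj ((1 - ζ) ^ (lam : ℂ))) := by
  have hq : 0 < w.im := hw
  have hre := re_one_sub_pos hζ
  have h1 : conj (1 - ζ) ≠ 0 := (map_ne_zero _).2 (one_sub_ne_zero hζ)
  have harg : (1 - ζ).arg ≠ Real.pi := fun h => by
    rw [Complex.arg_eq_pi_iff] at h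
    linarith [h.1]
  have harg' : (conj (1 - ζ)).arg ≠ Real.pi := fun h => by
    rw [Complex.arg_eq_pi_iff, Complex.conj_re] at h
    linarith [h.1]
  -- Splitting the principal power is legitimate because `w.im` is a positive real.
  have key : ((w.im : ℂ) * (conj (1 - ζ))⁻¹) ^ (-(lam : ℂ)) =
      (w.im : ℂ) ^ (-(lam : ℂ)) * ((conj (1 - ζ))⁻¹) ^ (-(lam : ℂ)) := by
    rw [Complex.cpow_def_of_ne_zero (mul_ne_zero (by exact_mod_cast hq.ne') (inv_ne_zero h1)),
      Complex.cpow_def_of_ne_zero (by exact_mod_cast hq.ne'),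
      Complex.cpow_def_of_ne_zero (inv_ne_zero h1), Complex.log_ofReal_mul hq (inv_ne_zero h1),
      ← Complex.exp_add, Complex.ofReal_log hq.le]
    ring_nf
  rw [bergmanK, kernel_arg hζ, key, Complex.inv_cpow _ _ harg', Complex.cpow_neg, Complex.cpow_neg,
    inv_inv, Complex.conj_cpow _ _ harg, Complex.conj_ofReal, Complex.ofReal_cpow hq.le,
    Complex.ofReal_neg, Complex.cpow_neg]

lemma im_rpow_cayley (s : ℝ) {w ζ : ℂ} (hw : w ∈ UHP) (hζ : ζ ∈ Metric.ball (0 : ℂ) 1) :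
    (cayley w ζ).im ^ s = w.im ^ s * (1 - ‖ζ‖ ^ 2) ^ s * ‖1 - ζ‖ ^ (-2 * s) := by
  have hq : 0 < w.im := hw
  have h2 : 0 < 1 - ‖ζ‖ ^ 2 := by
    simp only [Metric.mem_ball, dist_zero_right] at hζ
    nlinarith [norm_nonneg ζ]
  rw [im_cayley, Real.div_rpow (by positivity) (by positivity), Real.mul_rpow hq.le h2.le,
    div_eq_mul_inv, ← Real.rpow_natCast_mul (norm_nonneg _), ← Real.rpow_neg (norm_nonneg _)]
  norm_num

lemma conj_cpow_mul (lam : ℝ) {ζ : ℂ} (hζ : ζ ∈ Metric.ball (0 : ℂ) 1) :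
    conj ((1 - ζ) ^ (lam : ℂ)) =
      ((‖1 - ζ‖ ^ (2 * lam) : ℝ) : ℂ) * (1 - ζ) ^ (-(lam : ℂ)) := by
  have h0 := one_sub_ne_zero hζ
  have h1 : (1 - ζ) ^ (lam : ℂ) ≠ 0 := by simp [Complex.cpow_eq_zero_iff, h0]
  rw [Complex.cpow_neg, ← div_eq_mul_inv, eq_div_iff h1, mul_comm, Complex.mul_conj,
    Complex.normSq_eq_norm_sq, Complex.norm_cpow_real, ← Real.rpow_mul_natCast (norm_nonneg _)]
  congr 2
  push_cast
  ring

/-- In the coordinate `ζ` centred at `w`, the measure `K(w, z) (Im z)^(λ-2) dA(z)` becomes the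
rotation-invariant measure `(1 - |ζ|²)^(λ-2) dA(ζ)`, up to the holomorphic factor
`(1 - ζ)^(-λ)` and a constant. -/
lemma kernel_density (lam : ℝ) {w ζ : ℂ} (hw : w ∈ UHP) (hζ : ζ ∈ Metric.ball (0 : ℂ) 1) :
    ((4 * w.im ^ 2 / ‖1 - ζ‖ ^ 4 : ℝ) : ℂ) * (bergmanK lam w (cayley w ζ) *
        (((cayley w ζ).im ^ (lam - 2) : ℝ) : ℂ)) =
      ((lam - 1) / Real.pi) * ((((1 - ‖ζ‖ ^ 2) ^ (lam - 2) : ℝ) : ℂ) *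
        (1 - ζ) ^ (-(lam : ℂ))) := by
  have hq : 0 < w.im := hw
  have hn : 0 < ‖1 - ζ‖ := norm_pos_iff.2 (one_sub_ne_zero hζ)
  have hpi : (Real.pi : ℂ) ≠ 0 := by exact_mod_cast Real.pi_ne_zero
  have e : 4 * w.im ^ 2 / ‖1 - ζ‖ ^ 4 * (w.im ^ (-lam) * ‖1 - ζ‖ ^ (2 * lam) *
      (w.im ^ (lam - 2) * (1 - ‖ζ‖ ^ 2) ^ (lam - 2) * ‖1 - ζ‖ ^ (-2 * (lam - 2)))) =
      4 * (1 - ‖ζ‖ ^ 2) ^ (lam - 2) := by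
    have a1 : w.im ^ 2 * w.im ^ (-lam) * w.im ^ (lam - 2) = 1 := by
      rw [← Real.rpow_natCast, ← Real.rpow_add hq, ← Real.rpow_add hq,
        show ((2 : ℕ) : ℝ) + -lam + (lam - 2) = 0 by push_cast; ring, Real.rpow_zero]
    have a2 : ‖1 - ζ‖ ^ (2 * lam) * ‖1 - ζ‖ ^ (-2 * (lam - 2)) = ‖1 - ζ‖ ^ 4 := by
      rw [← Real.rpow_natCast, ← Real.rpow_add hn]
      congr 1
      push_cast
      ring
    calc _ = 4 * (w.im ^ 2 * w.im ^ (-lam) * w.im ^ (lam - 2)) * (1 - ‖ζ‖ ^ 2) ^ (lam - 2) *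
          (‖1 - ζ‖ ^ (2 * lam) * ‖1 - ζ‖ ^ (-2 * (lam - 2))) / ‖1 - ζ‖ ^ 4 := by ring
      _ = _ := by
        rw [a1, a2]
        field_simp
  have e' := congrArg (fun x : ℝ => (x : ℂ)) e
  rw [bergmanK_cayley lam hw hζ, im_rpow_cayley _ hw hζ, conj_cpow_mul lam hζ]
  push_cast at e' ⊢
  have hc : ((lam : ℂ) - 1) / Real.pi = 4 * ((lam - 1) / (4 * Real.pi)) := by
    field_simp
  rw [hc]
  linear_combination ((lam - 1) / (4 * Real.pi)) * (1 - ζ) ^ (-(lam : ℂ)) * e'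

/-- The counterpart of `kernel_density` for `|K(w, z)|²`: here the factors `1 - ζ` cancel entirely. -/
lemma kernel_sq_density (lam : ℝ) {w ζ : ℂ} (hw : w ∈ UHP) (hζ : ζ ∈ Metric.ball (0 : ℂ) 1) :
    (4 * w.im ^ 2 / ‖1 - ζ‖ ^ 4) * (‖bergmanK lam w (cayley w ζ)‖ ^ 2 *
        (cayley w ζ).im ^ (lam - 2)) =
      ((lam - 1) ^ 2 / (4 * Real.pi ^ 2)) * w.im ^ (-lam) * (1 - ‖ζ‖ ^ 2) ^ (lam - 2) := by
  have hq : 0 < w.im := hw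
  have hn : 0 < ‖1 - ζ‖ := norm_pos_iff.2 (one_sub_ne_zero hζ)
  have a1 : w.im ^ 2 * w.im ^ (-lam) * w.im ^ (lam - 2) = 1 := by
    rw [← Real.rpow_natCast, ← Real.rpow_add hq, ← Real.rpow_add hq,
      show ((2 : ℕ) : ℝ) + -lam + (lam - 2) = 0 by push_cast; ring, Real.rpow_zero]
  have a2 : (‖1 - ζ‖ ^ lam) ^ 2 * ‖1 - ζ‖ ^ (-2 * (lam - 2)) = ‖1 - ζ‖ ^ 4 := by
    rw [← Real.rpow_mul_natCast hn.le, ← Real.rpow_natCast, ← Real.rpow_add hn]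
    congr 1
    push_cast
    ring
  have hK : ‖bergmanK lam w (cayley w ζ)‖ ^ 2 =
      ((lam - 1) / (4 * Real.pi)) ^ 2 * (w.im ^ (-lam) * ‖1 - ζ‖ ^ lam) ^ 2 := by
    rw [bergmanK_cayley lam hw hζ, norm_mul, mul_pow, norm_mul, Complex.norm_conj,
      Complex.norm_cpow_real, Complex.norm_real, Real.norm_of_nonneg (by positivity)]
    congr 1
    have : ((lam : ℂ) - 1) / (4 * Real.pi) = (((lam - 1) / (4 * Real.pi) : ℝ) : ℂ) := by
      push_cast; ring
    rw [this, Complex.norm_real, Real.norm_eq_abs, sq_abs]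
  rw [hK, im_rpow_cayley _ hw hζ]
  calc _ = ((lam - 1) ^ 2 / (4 * Real.pi ^ 2)) * w.im ^ (-lam) * (1 - ‖ζ‖ ^ 2) ^ (lam - 2) *
        (w.im ^ 2 * w.im ^ (-lam) * w.im ^ (lam - 2)) *
        ((‖1 - ζ‖ ^ lam) ^ 2 * ‖1 - ζ‖ ^ (-2 * (lam - 2))) / ‖1 - ζ‖ ^ 4 := by
          field_simp
    _ = _ := by
      rw [a1, a2]
      field_simp

/-! ### The reproducing property of the Bergman kernel -/

lemma isOpen_UHP : IsOpen UHP := isOpen_lt continuous_const Complex.continuous_im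

lemma measurable_bergmanK (lam : ℝ) {α : Type*} [MeasurableSpace α] {u z : α → ℂ}
    (hu : Measurable u) (hz : Measurable z) :
    Measurable fun a => bergmanK lam (u a) (z a) := by
  unfold bergmanK
  have : Measurable fun a => conj (z a) := Complex.continuous_conj.measurable.comp hz
  fun_prop

/-- The kernel function `K(w, ·)` lies in the weighted Bergman space, and its squared norm is a
constant multiple of `(Im w)^(-λ)`. -/
lemma integrableOn_kernel_sq {lam : ℝ} (hl : 1 < lam) {w : ℂ} (hw : w ∈ UHP) :
    IntegrableOn (fun z => ‖bergmanK lam w z‖ ^ 2 * z.im ^ (lam - 2)) UHP ∧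
      ∫ z in UHP, ‖bergmanK lam w z‖ ^ 2 * z.im ^ (lam - 2) =
        (lam - 1) / (4 * Real.pi) * w.im ^ (-lam) := by
  have hs : -1 < lam - 2 := by linarith
  have hcongr : Set.EqOn (fun ζ => (4 * w.im ^ 2 / ‖1 - ζ‖ ^ 4) •
      (‖bergmanK lam w (cayley w ζ)‖ ^ 2 * (cayley w ζ).im ^ (lam - 2)))
      (fun ζ => ((lam - 1) ^ 2 / (4 * Real.pi ^ 2)) * w.im ^ (-lam) *
        (1 - ‖ζ‖ ^ 2) ^ (lam - 2)) (Metric.ball 0 1) := fun ζ hζ =>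
    kernel_sq_density lam hw hζ
  constructor
  · rw [integrableOn_UHP_iff hw, integrableOn_congr_fun hcongr measurableSet_ball]
    exact (integrableOn_ball_weight hs).const_mul _
  · rw [integral_UHP_eq hw, setIntegral_congr_fun measurableSet_ball hcongr, integral_const_mul,
      integral_ball_weight hs]
    have : lam - 1 ≠ 0 := by linarith
    rw [show lam - 2 + 1 = lam - 1 by ring]
    field_simp

lemma norm_mul_mul_le (a b : ℂ) {y : ℝ} (hy : 0 ≤ y) :
    ‖a * b * (y : ℂ)‖ ≤ ‖a‖ ^ 2 * y + ‖b‖ ^ 2 * y := by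
  rw [norm_mul, norm_mul, Complex.norm_real, Real.norm_of_nonneg hy, ← add_mul]
  gcongr
  nlinarith [sq_nonneg (‖a‖ - ‖b‖), norm_nonneg a, norm_nonneg b]

lemma integrableOn_mul_kernel {lam : ℝ} (hl : 1 < lam) {g : ℂ → ℂ}
    (hg : DifferentiableOn ℂ g UHP)
    (hgL2 : IntegrableOn (fun z => ‖g z‖ ^ 2 * z.im ^ (lam - 2)) UHP) {w : ℂ} (hw : w ∈ UHP) :
    IntegrableOn (fun z => g z * bergmanK lam w z * ((z.im ^ (lam - 2) : ℝ) : ℂ)) UHP := by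
  refine Integrable.mono' (hgL2.add (integrableOn_kernel_sq hl hw).1) ?_ ?_
  · have h1 := hg.continuousOn.aestronglyMeasurable (μ := volume) isOpen_UHP.measurableSet
    have h2 := measurable_bergmanK lam (measurable_const (a := w)) measurable_id
    have h3 : Measurable fun z : ℂ => ((z.im ^ (lam - 2) : ℝ) : ℂ) := by fun_prop
    exact (h1.mul h2.aestronglyMeasurable).mul h3.aestronglyMeasurable
  · filter_upwards [ae_restrict_mem isOpen_UHP.measurableSet] with z hz
    exact norm_mul_mul_le _ _ (Real.rpow_nonneg (le_of_lt hz) _)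

/-- The reproducing property. In the Cayley coordinate centred at `w` the integral becomes a radial
average of the holomorphic function `ζ ↦ g (cayley w ζ) (1 - ζ)^(-λ)`, whose value at `0` is
`g w`. -/
lemma reproducing {lam : ℝ} (hl : 1 < lam) {g : ℂ → ℂ}
    (hg : DifferentiableOn ℂ g UHP)
    (hgL2 : IntegrableOn (fun z => ‖g z‖ ^ 2 * z.im ^ (lam - 2)) UHP) {w : ℂ} (hw : w ∈ UHP) :
    ∫ z in UHP, g z * bergmanK lam w z * ((z.im ^ (lam - 2) : ℝ) : ℂ) = g w := by
  have hs : -1 < lam - 2 := by linarith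
  have hl1 : (lam : ℂ) - 1 ≠ 0 := by
    have : lam - 1 ≠ 0 := by linarith
    exact_mod_cast this
  have hpi : (Real.pi : ℂ) ≠ 0 := by exact_mod_cast Real.pi_ne_zero
  set F : ℂ → ℂ := fun ζ => g (cayley w ζ) * (1 - ζ) ^ (-(lam : ℂ)) with hF
  have hFd : DifferentiableOn ℂ F (Metric.ball 0 1) := by
    refine (hg.comp (fun ζ hζ => (cayley_hasDerivAt hζ).differentiableAt.differentiableWithinAt)
      fun ζ hζ => cayley_mem hw hζ).mul ?_
    intro ζ hζ
    have : DifferentiableAt ℂ (fun ζ : ℂ => 1 - ζ) ζ := by fun_prop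
    exact (this.cpow_const (Or.inl (re_one_sub_pos hζ))).differentiableWithinAt
  have hcongr : Set.EqOn (fun ζ => (4 * w.im ^ 2 / ‖1 - ζ‖ ^ 4) •
      (g (cayley w ζ) * bergmanK lam w (cayley w ζ) *
        (((cayley w ζ).im ^ (lam - 2) : ℝ) : ℂ)))
      (fun ζ => (((lam : ℂ) - 1) / Real.pi) * ((((1 - ‖ζ‖ ^ 2) ^ (lam - 2) : ℝ) : ℂ) * F ζ))
      (Metric.ball 0 1) := by
    intro ζ hζ
    have := kernel_density lam hw hζ
    simp only [Complex.real_smul, hF]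
    linear_combination g (cayley w ζ) * this
  have hint := integrableOn_mul_kernel hl hg hgL2 hw
  rw [integrableOn_UHP_iff hw, integrableOn_congr_fun hcongr measurableSet_ball] at hint
  have hint' : IntegrableOn (fun ζ : ℂ => (((1 - ‖ζ‖ ^ 2) ^ (lam - 2) : ℝ) : ℂ) * F ζ)
      (Metric.ball 0 1) :=
    (integrable_const_mul_iff (IsUnit.mk0 _ (div_ne_zero hl1 hpi)) _).1 hint
  rw [integral_UHP_eq hw, setIntegral_congr_fun measurableSet_ball hcongr, integral_const_mul,
    integral_ball_radial hFd (fun r => (1 - r ^ 2) ^ (lam - 2)) hint', integral_ball_weight hs]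
  have hF0 : F 0 = g w := by simp [hF, cayley]
  rw [hF0, show lam - 2 + 1 = lam - 1 by ring]
  push_cast
  field_simp

/-! ### Exchanging the two integrals -/

lemma min_le_im_segment {w₁ w₂ : ℂ} {v : ℝ} (hv : v ∈ Set.Ioo (-1 : ℝ) 1) :
    min w₁.im w₂.im ≤ (((w₂ - w₁) * v + (w₂ + w₁)) / 2 : ℂ).im := by
  have e : (((w₂ - w₁) * v + (w₂ + w₁)) / 2 : ℂ).im =
      (1 - v) / 2 * w₁.im + (1 + v) / 2 * w₂.im := by
    simp
    ring
  have h1 := mul_le_mul_of_nonneg_left (min_le_left w₁.im w₂.im)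
    (by linarith [hv.2] : 0 ≤ (1 - v) / 2)
  have h2 := mul_le_mul_of_nonneg_left (min_le_right w₁.im w₂.im)
    (by linarith [hv.1] : 0 ≤ (1 + v) / 2)
  rw [e]
  linarith

/-- Absolute convergence of the double integral. Since the segment from `w₁` to `w₂` keeps a
positive distance from the real axis, the norms of the kernel functions `K(w, ·)` with `w` on the
segment are bounded. -/
lemma integrable_double {lam : ℝ} (hl : 1 < lam) {g : ℂ → ℂ}
    (hg : DifferentiableOn ℂ g UHP)
    (hgL2 : IntegrableOn (fun z => ‖g z‖ ^ 2 * z.im ^ (lam - 2)) UHP) {w₁ w₂ : ℂ}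
    (hw₁ : w₁ ∈ UHP) (hw₂ : w₂ ∈ UHP) {W : ℝ → ℝ} (hW : Continuous W) :
    Integrable (Function.uncurry fun (z : ℂ) (v : ℝ) =>
      g z * bergmanK lam (((w₂ - w₁) * v + (w₂ + w₁)) / 2) z *
        ((z.im ^ (lam - 2) : ℝ) : ℂ) * (W v : ℂ))
      ((volume.restrict UHP).prod (volume.restrict (Set.Ioo (-1 : ℝ) 1))) := by
  have hm : 0 < min w₁.im w₂.im := lt_min hw₁ hw₂
  have hmem : ∀ v ∈ Set.Ioo (-1 : ℝ) 1, ((w₂ - w₁) * v + (w₂ + w₁)) / 2 ∈ UHP := fun v hv =>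
    lt_of_lt_of_le hm (min_le_im_segment hv)
  have hmeas : AEStronglyMeasurable (Function.uncurry fun (z : ℂ) (v : ℝ) =>
      g z * bergmanK lam (((w₂ - w₁) * v + (w₂ + w₁)) / 2) z *
        ((z.im ^ (lam - 2) : ℝ) : ℂ) * (W v : ℂ))
      ((volume.restrict UHP).prod (volume.restrict (Set.Ioo (-1 : ℝ) 1))) := by
    have h1 : AEStronglyMeasurable (fun p : ℂ × ℝ => g p.1)
        ((volume.restrict UHP).prod (volume.restrict (Set.Ioo (-1 : ℝ) 1))) :=
      (hg.continuousOn.aestronglyMeasurable isOpen_UHP.measurableSet).comp_fst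
    have h2 : Measurable fun p : ℂ × ℝ =>
        bergmanK lam (((w₂ - w₁) * p.2 + (w₂ + w₁)) / 2) p.1 :=
      measurable_bergmanK lam (by fun_prop) measurable_fst
    have h3 : Measurable fun p : ℂ × ℝ => ((p.1.im ^ (lam - 2) : ℝ) : ℂ) := by fun_prop
    have h4 : Measurable fun p : ℂ × ℝ => (W p.2 : ℂ) := by
      have := hW.measurable
      fun_prop
    exact ((h1.mul h2.aestronglyMeasurable).mul h3.aestronglyMeasurable).mul
      h4.aestronglyMeasurable
  rw [integrable_prod_iff' hmeas]
  have hWi : IntegrableOn W (Set.Ioo (-1 : ℝ) 1) :=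
    (hW.continuousOn.integrableOn_compact isCompact_Icc).mono_set Set.Ioo_subset_Icc_self
  set A : ℝ := ∫ z in UHP, ‖g z‖ ^ 2 * z.im ^ (lam - 2) with hA
  set B : ℝ := (lam - 1) / (4 * Real.pi) with hB
  have hB0 : 0 ≤ B := div_nonneg (by linarith) (by positivity)
  constructor
  · filter_upwards [ae_restrict_mem measurableSet_Ioo] with v hv
    exact (integrableOn_mul_kernel hl hg hgL2 (hmem v hv)).mul_const (W v : ℂ)
  · refine Integrable.mono' (hWi.norm.mul_const (A + B * (min w₁.im w₂.im) ^ (-lam)))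
      hmeas.prod_swap.norm.integral_prod_right' ?_
    filter_upwards [ae_restrict_mem measurableSet_Ioo] with v hv
    rw [Real.norm_of_nonneg (integral_nonneg fun _ => norm_nonneg _)]
    obtain ⟨hKi, hKv⟩ := integrableOn_kernel_sq hl (hmem v hv)
    simp only [Function.uncurry_apply_pair]
    set w : ℂ := ((w₂ - w₁) * v + (w₂ + w₁)) / 2 with hw
    have hpt : ∀ z : ℂ, ‖g z * bergmanK lam w z * ((z.im ^ (lam - 2) : ℝ) : ℂ) * (W v : ℂ)‖ =
        ‖W v‖ * ‖g z * bergmanK lam w z * ((z.im ^ (lam - 2) : ℝ) : ℂ)‖ := by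
      intro z
      rw [norm_mul, Complex.norm_real, mul_comm]
    simp only [hpt]
    rw [integral_const_mul]
    refine mul_le_mul_of_nonneg_left ?_ (norm_nonneg _)
    calc ∫ z in UHP, ‖g z * bergmanK lam w z * ((z.im ^ (lam - 2) : ℝ) : ℂ)‖
        ≤ ∫ z in UHP, (‖g z‖ ^ 2 * z.im ^ (lam - 2) +
            ‖bergmanK lam w z‖ ^ 2 * z.im ^ (lam - 2)) :=
          setIntegral_mono_on (integrableOn_mul_kernel hl hg hgL2 (hmem v hv)).norm
            (hgL2.add hKi) isOpen_UHP.measurableSet fun z hz =>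
              norm_mul_mul_le _ _ (Real.rpow_nonneg (le_of_lt hz) _)
      _ = A + B * w.im ^ (-lam) := by rw [integral_add hgL2 hKi, hKv]
      _ ≤ _ := by
        have h := Real.rpow_le_rpow_of_nonpos hm (min_le_im_segment hv)
          (by linarith : -lam ≤ 0)
        exact add_le_add_right (mul_le_mul_of_nonneg_left h hB0) A

/-- for g in the weighted Bergman space H²_{λ'''}(Π),
Ψ(g)(w₁,w₂) = ∫_Π g(z) Ψ(K_{λ'''}(·,z))(w₁,w₂) Im(z)^{λ'''−2} dA(z). -/
theorem Psi_eq_integral_against_Psi_kernel (lam' lam'' lam''' : ℝ)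
    (h' : 1 < lam') (h'' : 1 < lam'') (h''' : 1 < lam''') (l : ℕ)
    (hl : lam''' = lam' + lam'' + 2 * l)
    (g : ℂ → ℂ) (hg : DifferentiableOn ℂ g UHP)
    (hgL2 : IntegrableOn (fun z => ‖g z‖ ^ 2 * z.im ^ (lam''' - 2)) UHP)
    (w₁ w₂ : ℂ) (hw₁ : w₁ ∈ UHP) (hw₂ : w₂ ∈ UHP) :
    Psi lam' lam'' l g w₁ w₂ =
      ∫ z in UHP, g z * Psi lam' lam'' l (fun u => bergmanK lam''' u z) w₁ w₂ *
        ((z.im ^ (lam''' - 2) : ℝ) : ℂ) := by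
  have hW : Continuous fun v : ℝ => (1 - v) ^ (lam' + l - 1) * (1 + v) ^ (lam'' + l - 1) := by
    have hl0 : (0 : ℝ) ≤ l := Nat.cast_nonneg l
    refine Continuous.mul ?_ ?_
    · exact Continuous.rpow_const (by fun_prop) fun _ => Or.inr (by linarith)
    · exact Continuous.rpow_const (by fun_prop) fun _ => Or.inr (by linarith)
  have hsw := integral_integral_swap (integrable_double h''' hg hgL2 hw₁ hw₂ hW)
  unfold Psi
  set c : ℂ := (w₁ - w₂) ^ l / ((((2 : ℝ) ^ (lam' + lam'' + 2 * l - 1) : ℝ) : ℂ) *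
    (l.factorial : ℂ)) with hc
  have hz : ∀ z : ℂ, g z * (c * ∫ v in Set.Ioo (-1 : ℝ) 1,
      bergmanK lam''' (((w₂ - w₁) * v + (w₂ + w₁)) / 2) z *
        (((1 - v) ^ (lam' + l - 1) * (1 + v) ^ (lam'' + l - 1) : ℝ) : ℂ)) *
        ((z.im ^ (lam''' - 2) : ℝ) : ℂ) =
      c * ∫ v in Set.Ioo (-1 : ℝ) 1,
        g z * bergmanK lam''' (((w₂ - w₁) * v + (w₂ + w₁)) / 2) z *
          ((z.im ^ (lam''' - 2) : ℝ) : ℂ) *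
          (((1 - v) ^ (lam' + l - 1) * (1 + v) ^ (lam'' + l - 1) : ℝ) : ℂ) := by
    intro z
    rw [show ∀ J : ℂ, g z * (c * J) * ((z.im ^ (lam''' - 2) : ℝ) : ℂ) =
      c * ((g z * ((z.im ^ (lam''' - 2) : ℝ) : ℂ)) * J) from fun J => by ring,
      ← integral_const_mul]
    congr 2
    ext v
    ring
  simp only [hz]
  rw [integral_const_mul, hsw]
  congr 1
  refine setIntegral_congr_fun measurableSet_Ioo fun v hv => ?_
  have hmem : ((w₂ - w₁) * v + (w₂ + w₁)) / 2 ∈ UHP :=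
    lt_of_lt_of_le (lt_min hw₁ hw₂) (min_le_im_segment hv)
  rw [integral_mul_const, reproducing h''' hg hgL2 hmem]
end
end

section
/- Let λ', λ'' > 1 be real numbers, l ∈ ℕ, and set λ''' = λ' + λ'' + 2l. Let N := ∫_{−1}^{1} P_l^{λ'−1,λ''−1}(u)² (1−u)^{λ'−1}(1+u)^{λ''−1} du. Let F : (0,∞) × (0,∞) → ℂ be continuous, and for t > 0 assume u ↦ F(t(1−u)/2, t(1+u)/2) is integrable on (−1,1). Then the diagram of symmetry breaking and holographic operators commutes up to an explicit constant: for all x, y > 0, (T_ι^{−1} ∘ J_l ∘ T_ι F)(x,y) = (2^{λ'+λ''−1} i^l / N) · Φ_{λ',λ''}^{λ'''}( \widehat{RC}_{λ',λ''}^{λ'''} F )(x,y). -/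
/-!
On `(-1, 1)` the weight `(1 - u) ^ (lam' - 1) * (1 + u) ^ (lam'' - 1)` of the Jacobi projection cancels
the factor `(1 - u) ^ (1 - lam') * (1 + u) ^ (1 - lam'')` introduced by `Tiota`, so both sides contain
the same integral of `jacobiP` against `F` (`integral_Tiota_mul_weight`). What is left is an identity
between powers of `t = x + y` (`half_rpow_eq`). Only pointwise identities of integrands and
the extraction of constants are involved.
-/

open MeasureTheory
open Complex (I)

noncomputable section

/-- Jacobi polynomial P_l^{α,β} via the Rodrigues formula. -/
def jacobiP (α β : ℝ) (l : ℕ) (v : ℝ) : ℝ :=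
  ((-1 : ℝ) ^ l / ((2 : ℝ) ^ l * (l.factorial : ℝ))) * (1 - v) ^ (-α) * (1 + v) ^ (-β) *
    iteratedDeriv l (fun u => (1 - u) ^ (α + l) * (1 + u) ^ (β + l)) v

/-- The transfer operator T_ι. -/
def Tiota (lam' lam'' : ℝ) (f : ℝ → ℝ → ℂ) (t v : ℝ) : ℂ :=
  (((t / 2) ^ (2 - lam' - lam'') * (1 - v) ^ (1 - lam') * (1 + v) ^ (1 - lam'') : ℝ) : ℂ) *
    f (t * (1 - v) / 2) (t * (1 + v) / 2)

/-- The inverse transfer operator T_ι^{−1}. -/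
def TiotaInv (lam' lam'' : ℝ) (h : ℝ → ℝ → ℂ) (x y : ℝ) : ℂ :=
  ((x ^ (lam' - 1) * y ^ (lam'' - 1) : ℝ) : ℂ) * h (x + y) ((y - x) / (x + y))

/-- The Jacobi projection J_l. -/
def Jl (lam' lam'' : ℝ) (l : ℕ) (N : ℝ) (h : ℝ → ℝ → ℂ) (t v : ℝ) : ℂ :=
  ((jacobiP (lam' - 1) (lam'' - 1) l v / N : ℝ) : ℂ) *
    ∫ u in Set.Ioo (-1 : ℝ) 1,
      h t u * ((jacobiP (lam' - 1) (lam'' - 1) l u * (1 - u) ^ (lam' - 1) *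
        (1 + u) ^ (lam'' - 1) : ℝ) : ℂ)

/-- The Rankin–Cohen operator in the L²-model:
(RĈ F)(t) = (t^{l+1}/(2 i^l)) ∫_{−1}^{1} P_l^{λ'−1,λ''−1}(v) F(t(1−v)/2, t(1+v)/2) dv. -/
def RChat (lam' lam'' : ℝ) (l : ℕ) (F : ℝ → ℝ → ℂ) (t : ℝ) : ℂ :=
  ((t : ℂ) ^ (l + 1) / (2 * I ^ l)) *
    ∫ v in Set.Ioo (-1 : ℝ) 1,
      ((jacobiP (lam' - 1) (lam'' - 1) l v : ℝ) : ℂ) * F (t * (1 - v) / 2) (t * (1 + v) / 2)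

/-- The holographic operator in the L²-model:
(Φ g)(x,y) = (x^{λ'−1} y^{λ''−1}/(x+y)^{λ'+λ''+l−1}) P_l^{λ'−1,λ''−1}((y−x)/(x+y)) g(x+y). -/
def PhiOp (lam' lam'' : ℝ) (l : ℕ) (g : ℝ → ℂ) (x y : ℝ) : ℂ :=
  ((x ^ (lam' - 1) * y ^ (lam'' - 1) / (x + y) ^ (lam' + lam'' + l - 1) *
      jacobiP (lam' - 1) (lam'' - 1) l ((y - x) / (x + y)) : ℝ) : ℂ) * g (x + y)

/-- The weight of the Jacobi projection undoes the `v`-dependent factor of `Tiota`. -/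
theorem integral_Tiota_mul_weight (a b : ℝ) (l : ℕ) (F : ℝ → ℝ → ℂ) (t : ℝ) :
    (∫ u in Set.Ioo (-1 : ℝ) 1, Tiota a b F t u *
      ((jacobiP (a - 1) (b - 1) l u * (1 - u) ^ (a - 1) * (1 + u) ^ (b - 1) : ℝ) : ℂ)) =
    (((t / 2) ^ (2 - a - b) : ℝ) : ℂ) * ∫ u in Set.Ioo (-1 : ℝ) 1,
      ((jacobiP (a - 1) (b - 1) l u : ℝ) : ℂ) * F (t * (1 - u) / 2) (t * (1 + u) / 2) := by
  rw [← integral_const_mul]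
  refine setIntegral_congr_fun measurableSet_Ioo fun u hu => ?_
  have cancel : ∀ {z : ℝ}, 0 < z → ∀ c : ℝ, z ^ (1 - c) * z ^ (c - 1) = 1 := fun hz c => by
    rw [← Real.rpow_add hz, sub_add_sub_cancel, sub_self, Real.rpow_zero]
  have h1 : (((1 - u) ^ (1 - a) : ℝ) : ℂ) * (((1 - u) ^ (a - 1) : ℝ) : ℂ) = 1 := by
    exact_mod_cast cancel (by linarith [hu.2] : 0 < 1 - u) a
  have h2 : (((1 + u) ^ (1 - b) : ℝ) : ℂ) * (((1 + u) ^ (b - 1) : ℝ) : ℂ) = 1 := by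
    exact_mod_cast cancel (by linarith [hu.1] : 0 < 1 + u) b
  simp only [Tiota, Complex.ofReal_mul]
  linear_combination
    (((t / 2) ^ (2 - a - b) : ℝ) : ℂ) * ((jacobiP (a - 1) (b - 1) l u : ℝ) : ℂ) *
      F (t * (1 - u) / 2) (t * (1 + u) / 2) *
      ((((1 + u) ^ (1 - b) : ℝ) : ℂ) * (((1 + u) ^ (b - 1) : ℝ) : ℂ) * h1 + h2)

/-- The powers of `t` and `2` on the two sides of the diagram agree. -/
theorem half_rpow_eq (a b : ℝ) (l : ℕ) {t : ℝ} (ht : 0 < t) :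
    (t / 2) ^ (2 - a - b) = 2 ^ (a + b - 1) / 2 * (t ^ (l + 1) / t ^ (a + b + l - 1)) := by
  have e2 : (2 : ℝ) ^ (a + b - 1) / 2 = (2 ^ (2 - a - b))⁻¹ := by
    rw [← Real.rpow_neg zero_le_two, ← Real.rpow_sub_one two_ne_zero]
    ring_nf
  have et : t ^ (l + 1) / t ^ (a + b + l - 1) = t ^ (2 - a - b) := by
    rw [← Real.rpow_natCast, ← Real.rpow_sub ht]
    push_cast
    ring_nf
  rw [e2, et, Real.div_rpow ht.le zero_le_two, div_eq_inv_mul]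

/-- the symmetry breaking / holographic diagram commutes:
T_ι^{−1} ∘ J_l ∘ T_ι = (2^{λ'+λ''−1} i^l / N) · Φ ∘ RĈ. -/
theorem diagram_commutes (lam' lam'' lam''' : ℝ) (h' : 1 < lam') (h'' : 1 < lam'')
    (l : ℕ) (hl : lam''' = lam' + lam'' + 2 * l) (N : ℝ)
    (hN : N = ∫ u in Set.Ioo (-1 : ℝ) 1,
      (jacobiP (lam' - 1) (lam'' - 1) l u) ^ 2 * (1 - u) ^ (lam' - 1) * (1 + u) ^ (lam'' - 1))
    (F : ℝ → ℝ → ℂ)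
    (hF : ContinuousOn (fun p : ℝ × ℝ => F p.1 p.2) (Set.Ioi 0 ×ˢ Set.Ioi 0))
    (hFint : ∀ t : ℝ, 0 < t →
      IntegrableOn (fun u : ℝ => F (t * (1 - u) / 2) (t * (1 + u) / 2)) (Set.Ioo (-1) 1))
    (x y : ℝ) (hx : 0 < x) (hy : 0 < y) :
    TiotaInv lam' lam'' (Jl lam' lam'' l N (Tiota lam' lam'' F)) x y =
      ((((2 : ℝ) ^ (lam' + lam'' - 1) : ℝ) : ℂ) * I ^ l / (N : ℂ)) *
        PhiOp lam' lam'' l (RChat lam' lam'' l F) x y := by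
  simp only [TiotaInv, Jl, PhiOp, RChat]
  rw [integral_Tiota_mul_weight, half_rpow_eq lam' lam'' l (add_pos hx hy)]
  have hI : I ^ l * (I ^ l)⁻¹ = 1 := mul_inv_cancel₀ (pow_ne_zero _ Complex.I_ne_zero)
  generalize (∫ u in Set.Ioo (-1 : ℝ) 1, _ : ℂ) = J
  push_cast
  simp only [div_eq_mul_inv, mul_inv]
  -- `N⁻¹` is a common factor of both sides, even when it is the junk value `0⁻¹`;
  -- only `I ^ l` has to be cancelled.
  generalize (I ^ l)⁻¹ = c at hI ⊢
  grind
end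
end

section
/- Let α, β > 1 be real numbers, l ∈ ℕ, and x > 0 a real number. Then C_{α,β} · x^l · e^{ix} · ₁F₁(α+l, α+β+2l; −2ix) = ∫_{−1}^{1} P_l^{α−1,β−1}(v) e^{ivx} (1−v)^{α−1}(1+v)^{β−1} dv, where C_{α,β} = (2^{α+β+l−1} i^l / l!) · B(α+l, β+l) and B denotes the Euler beta function. -/
/-!
Why the representation holds. By the Rodrigues formula, multiplying `P_l^{α-1,β-1}` by its weight
leaves, up to the factor `(-1)^l / (2^l l!)`, the `l`-th derivative of
`(1-v)^(α-1+l) (1+v)^(β-1+l)`. Integrating by parts `l` times against `e^{ivx}` moves all the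
derivatives onto the exponential and produces `(-ix)^l`
(`integral_iteratedDeriv_jacobiWeight`). To control the boundary terms, each
intermediate derivative is kept in the form `(1-v)^r (1+v)^s Q(v)` with `Q` a polynomial and
`r, s > 0`: such functions are continuous on `[-1, 1]` and vanish at both endpoints, and
differentiation only lowers `r` and `s` by one (`hasDerivAt_jacobiWeight`).

The substitution `v = 1 - 2t` turns what remains into Euler's integral
`∫₀¹ t^(p-1) (1-t)^(q-1) e^{zt} dt = B(p,q) ₁F₁(p, p+q; z)` with `p = α + l`, `q = β + l`,
`z = -2ix`. This is proved in `integral_kummer` by expanding `e^{zt}`, integrating term by term and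
using `B(p+n,q) = B(p,q) (p)_n / (p+q)_n`.
-/

open MeasureTheory
open Complex (I)

noncomputable section

/-- The weighted polynomial `(1 - u)^r (1 + u)^s Q(u)`. -/
def jacobiWeight (Q : Polynomial ℝ) (r s u : ℝ) : ℝ := (1 - u) ^ r * (1 + u) ^ s * Q.eval u

/-- The polynomial `R` with `d/du [(1-u)^r (1+u)^s Q] = (1-u)^(r-1) (1+u)^(s-1) R` on `(-1, 1)`. -/
def jacobiStep (Q : Polynomial ℝ) (r s : ℝ) : Polynomial ℝ :=
  (Polynomial.C s * (1 - Polynomial.X) - Polynomial.C r * (1 + Polynomial.X)) * Q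
    + (1 - Polynomial.X) * (1 + Polynomial.X) * Polynomial.derivative Q

lemma hasDerivAt_jacobiWeight (Q : Polynomial ℝ) (r s : ℝ) {u : ℝ} (hu : u ∈ Set.Ioo (-1 : ℝ) 1) :
    HasDerivAt (jacobiWeight Q r s) (jacobiWeight (jacobiStep Q r s) (r - 1) (s - 1) u) u := by
  have h1 : 0 < 1 - u := by linarith [hu.2]
  have h2 : 0 < 1 + u := by linarith [hu.1]
  have d1 := ((hasDerivAt_id u).const_sub 1).rpow_const (p := r) (Or.inl h1.ne')
  have d2 := ((hasDerivAt_id u).const_add 1).rpow_const (p := s) (Or.inl h2.ne')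
  refine ((d1.mul d2).mul (Q.hasDerivAt u)).congr_deriv ?_
  have e1 : (1 - u) ^ r = (1 - u) ^ (r - 1) * (1 - u) := by
    rw [← Real.rpow_add_one h1.ne']; congr 1; ring
  have e2 : (1 + u) ^ s = (1 + u) ^ (s - 1) * (1 + u) := by
    rw [← Real.rpow_add_one h2.ne']; congr 1; ring
  simp only [jacobiWeight, jacobiStep, id, e1, e2, Pi.mul_apply, Polynomial.eval_add, Polynomial.eval_mul,
    Polynomial.eval_sub, Polynomial.eval_C, Polynomial.eval_X, Polynomial.eval_one]
  ring

lemma continuous_jacobiWeight (Q : Polynomial ℝ) {r s : ℝ} (hr : 0 ≤ r) (hs : 0 ≤ s) :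
    Continuous (jacobiWeight Q r s) := by
  unfold jacobiWeight
  exact (((continuous_const.sub continuous_id).rpow_const fun _ => Or.inr hr).mul
    ((continuous_const.add continuous_id).rpow_const fun _ => Or.inr hs)).mul Q.continuous

/-- Equality on the open interval suffices; the derivatives below are computed only there. -/
lemma integral_congr_on_Ioo {f g : ℝ → ℂ} (h : ∀ v ∈ Set.Ioo (-1 : ℝ) 1, f v = g v) :
    ∫ v in (-1 : ℝ)..1, f v = ∫ v in (-1 : ℝ)..1, g v := by
  rw [intervalIntegral.integral_of_le (by norm_num), intervalIntegral.integral_of_le (by norm_num),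
    integral_Ioc_eq_integral_Ioo, integral_Ioc_eq_integral_Ioo]
  exact setIntegral_congr_fun measurableSet_Ioo h

/-- One integration by parts; both boundary terms vanish because the exponents are positive. -/
lemma integral_jacobiStep_mul_exp (Q : Polynomial ℝ) {r s : ℝ} (hr : 0 < r) (hs : 0 < s) (x : ℝ) :
    ∫ v in (-1 : ℝ)..1,
        ((jacobiWeight (jacobiStep Q (r + 1) (s + 1)) r s v : ℝ) : ℂ) * Complex.exp (I * v * x) =
      (-(I * x)) * ∫ v in (-1 : ℝ)..1,
        ((jacobiWeight Q (r + 1) (s + 1) v : ℝ) : ℂ) * Complex.exp (I * v * x) := by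
  have dexp : ∀ v : ℝ, HasDerivAt (fun v : ℝ => Complex.exp (I * v * x))
      (Complex.exp (I * v * x) * (I * x)) v := by
    intro v
    have h := (((hasDerivAt_id (v : ℂ)).const_mul I).mul_const (x : ℂ)).cexp.comp_ofReal
    simpa using h
  have hc : Continuous fun v : ℝ => Complex.exp (I * v * x) := by fun_prop
  have hW := continuous_jacobiWeight (jacobiStep Q (r + 1) (s + 1)) hr.le hs.le
  have hW' := continuous_jacobiWeight Q (add_pos hr one_pos).le (add_pos hs one_pos).le
  have key := intervalIntegral.integral_mul_deriv_eq_deriv_mul_of_hasDerivAt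
    (a := -1) (b := 1)
    (u := fun v : ℝ => ((jacobiWeight Q (r + 1) (s + 1) v : ℝ) : ℂ))
    (u' := fun v : ℝ => ((jacobiWeight (jacobiStep Q (r + 1) (s + 1)) r s v : ℝ) : ℂ))
    (v := fun v : ℝ => Complex.exp (I * v * x))
    (v' := fun v : ℝ => Complex.exp (I * v * x) * (I * x))
    (Complex.continuous_ofReal.comp hW').continuousOn hc.continuousOn
    (by
      intro v hv
      have hv' : v ∈ Set.Ioo (-1 : ℝ) 1 := by simpa using hv
      simpa using (hasDerivAt_jacobiWeight Q (r + 1) (s + 1) hv').ofReal_comp)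
    (fun v _ => dexp v)
    ((Complex.continuous_ofReal.comp hW).intervalIntegrable _ _)
    ((hc.mul continuous_const).intervalIntegrable _ _)
  have b1 : jacobiWeight Q (r + 1) (s + 1) 1 = 0 := by
    simp [jacobiWeight, Real.zero_rpow (add_pos hr one_pos).ne']
  have b2 : jacobiWeight Q (r + 1) (s + 1) (-1) = 0 := by
    simp [jacobiWeight, Real.zero_rpow (add_pos hs one_pos).ne']
  simp only [b1, b2, Complex.ofReal_zero, zero_mul, sub_zero, zero_sub, ← mul_assoc] at key
  simp only [mul_assoc _ I (x : ℂ)] at key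
  rw [intervalIntegral.integral_mul_const] at key
  rw [eq_comm, neg_mul, mul_comm, key, neg_neg]

/-- Iterated integration by parts. The polynomial `Q` is arbitrary so that the induction can pass
from the weighted polynomial to its derivative, which is again one. -/
lemma integral_iteratedDeriv_jacobiWeight {r s : ℝ} (hr : 0 < r) (hs : 0 < s) (x : ℝ) (l : ℕ) :
    ∀ Q : Polynomial ℝ, ∫ v in (-1 : ℝ)..1,
        ((iteratedDeriv l (jacobiWeight Q (r + l) (s + l)) v : ℝ) : ℂ) * Complex.exp (I * v * x) =
      (-(I * x)) ^ l * ∫ v in (-1 : ℝ)..1,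
        ((jacobiWeight Q (r + l) (s + l) v : ℝ) : ℂ) * Complex.exp (I * v * x) := by
  induction l with
  | zero => intro Q; simp
  | succ n ih =>
    intro Q
    have hrn : 0 < r + n := by positivity
    have hsn : 0 < s + n := by positivity
    -- The two functions differentiated here agree on `(-1, 1)`, hence near each of its points.
    have hE : ∀ v ∈ Set.Ioo (-1 : ℝ) 1,
        iteratedDeriv (n + 1) (jacobiWeight Q (r + n + 1) (s + n + 1)) v =
        iteratedDeriv n (jacobiWeight (jacobiStep Q (r + n + 1) (s + n + 1)) (r + n) (s + n)) v := by
      intro v hv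
      rw [iteratedDeriv_succ']
      apply Filter.EventuallyEq.iteratedDeriv_eq
      filter_upwards [isOpen_Ioo.mem_nhds hv] with u hu
      simpa using (hasDerivAt_jacobiWeight Q (r + n + 1) (s + n + 1) hu).deriv
    push_cast
    rw [← add_assoc, ← add_assoc, integral_congr_on_Ioo fun v hv => by rw [hE v hv], ih,
      integral_jacobiStep_mul_exp Q hrn hsn, pow_succ, mul_assoc]

lemma Gamma_add_nat {p : ℝ} (hp : 0 < p) (n : ℕ) :
    Real.Gamma (p + n) = poch p n * Real.Gamma p := by
  induction n with
  | zero => simp [poch]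
  | succ n ih =>
    have : p + n ≠ 0 := by positivity
    rw [Nat.cast_succ, ← add_assoc, Real.Gamma_add_one this, ih, poch, poch, Finset.prod_range_succ]
    ring

lemma integral_beta {p q : ℝ} (hp : 0 < p) (hq : 0 < q) :
    ∫ t in (0 : ℝ)..1, ((t ^ (p - 1) * (1 - t) ^ (q - 1) : ℝ) : ℂ) = (eulerBeta p q : ℝ) := by
  have h := Complex.betaIntegral_eq_Gamma_mul_div p q (by simpa) (by simpa)
  rw [Complex.Gamma_ofReal, Complex.Gamma_ofReal, ← Complex.ofReal_add, Complex.Gamma_ofReal] at h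
  unfold eulerBeta
  push_cast
  rw [← h, Complex.betaIntegral]
  apply intervalIntegral.integral_congr
  intro t ht
  rw [Set.uIcc_of_le zero_le_one] at ht
  simp only
  rw [Complex.ofReal_cpow ht.1, Complex.ofReal_cpow (by linarith [ht.2])]
  push_cast
  rfl

/-- Euler's integral for `₁F₁`, by expanding the exponential and integrating term by term. -/
lemma integral_kummer {p q : ℝ} (hp : 1 < p) (hq : 1 < q) (z : ℂ) :
    ∫ t in (0 : ℝ)..1, ((t ^ (p - 1) * (1 - t) ^ (q - 1) : ℝ) : ℂ) * Complex.exp (z * t) =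
      (eulerBeta p q : ℝ) * kummer p (p + q) z := by
  have hp0 : 0 < p := by linarith
  have hq0 : 0 < q := by linarith
  have hcont : Continuous fun t : ℝ => t ^ (p - 1) * (1 - t) ^ (q - 1) :=
    (continuous_id.rpow_const fun _ => Or.inr (by linarith)).mul
      ((continuous_const.sub continuous_id).rpow_const fun _ => Or.inr (by linarith))
  have hsum := intervalIntegral.hasSum_integral_of_dominated_convergence (μ := volume)
    (a := 0) (b := 1)
    (F := fun (n : ℕ) (t : ℝ) => ((t ^ (p - 1) * (1 - t) ^ (q - 1) : ℝ) : ℂ) *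
      ((z * t) ^ n / (n.factorial : ℂ)))
    (f := fun t : ℝ => ((t ^ (p - 1) * (1 - t) ^ (q - 1) : ℝ) : ℂ) * Complex.exp (z * t))
    (fun n _ => ‖z‖ ^ n / n.factorial)
    (fun n => ((Complex.continuous_ofReal.comp hcont).mul
      (by fun_prop : Continuous fun t : ℝ => (z * t) ^ n / (n.factorial : ℂ))).aestronglyMeasurable)
    (by
      refine fun n => Filter.Eventually.of_forall fun t ht => ?_
      rw [Set.uIoc_of_le zero_le_one] at ht
      have h0 : 0 ≤ 1 - t := by linarith [ht.2]
      have h1 : t ^ (p - 1) ≤ 1 := Real.rpow_le_one ht.1.le ht.2 (by linarith)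
      have h2 : (1 - t) ^ (q - 1) ≤ 1 := Real.rpow_le_one h0 (by linarith [ht.1]) (by linarith)
      have h3 : 0 ≤ t ^ (p - 1) := Real.rpow_nonneg ht.1.le _
      have h4 : 0 ≤ (1 - t) ^ (q - 1) := Real.rpow_nonneg h0 _
      rw [norm_mul, Complex.norm_real, Real.norm_of_nonneg (by positivity), norm_div, norm_pow,
        norm_mul, Complex.norm_real, Real.norm_of_nonneg ht.1.le, Complex.norm_natCast]
      have h5 : ‖z‖ * t ≤ ‖z‖ := mul_le_of_le_one_right (norm_nonneg _) ht.2
      have h6 : 0 ≤ ‖z‖ * t := mul_nonneg (norm_nonneg _) ht.1.le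
      calc _ ≤ 1 * ((‖z‖ * t) ^ n / n.factorial) := by
            gcongr
            exact mul_le_one₀ h1 h4 h2
        _ ≤ _ := by rw [one_mul]; gcongr)
    (Filter.Eventually.of_forall fun t _ => Real.summable_pow_div_factorial _)
    (by simp)
    (Filter.Eventually.of_forall fun t _ => by
      have := NormedSpace.expSeries_div_hasSum_exp (z * (t : ℂ))
      rw [← Complex.exp_eq_exp_ℂ] at this
      exact this.mul_left _)
  rw [← hsum.tsum_eq, kummer, ← tsum_mul_left]
  refine tsum_congr fun n => ?_
  have hterm : ∀ t ∈ Set.uIcc (0 : ℝ) 1, ((t ^ (p - 1) * (1 - t) ^ (q - 1) : ℝ) : ℂ) *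
      ((z * t) ^ n / (n.factorial : ℂ)) =
      ((t ^ (p + n - 1) * (1 - t) ^ (q - 1) : ℝ) : ℂ) * (z ^ n / (n.factorial : ℂ)) := by
    intro t ht
    rw [Set.uIcc_of_le zero_le_one] at ht
    have : t ^ (p + n - 1) = t ^ (p - 1) * t ^ n := by
      rw [← Real.rpow_add_natCast' ht.1 (by have : (0:ℝ) ≤ n := n.cast_nonneg
                                            linarith)]
      congr 1; ring
    rw [this]
    push_cast
    ring
  rw [intervalIntegral.integral_congr hterm, intervalIntegral.integral_mul_const,
    integral_beta (by positivity) hq0]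
  have e : eulerBeta (p + n) q = eulerBeta p q * (poch p n / poch (p + q) n) := by
    unfold eulerBeta
    rw [add_right_comm, Gamma_add_nat hp0, Gamma_add_nat (add_pos hp0 hq0)]
    simp only [div_eq_mul_inv, mul_inv]
    ring
  rw [e]
  push_cast
  ring

/-- integral representation of the Kummer function in terms of Jacobi
polynomials: C_{α,β} x^l e^{ix} ₁F₁(α+l, α+β+2l; −2ix)
= ∫_{−1}^{1} P_l^{α−1,β−1}(v) e^{ivx} (1−v)^{α−1}(1+v)^{β−1} dv,
where C_{α,β} = (2^{α+β+l−1} i^l / l!) B(α+l, β+l). -/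
theorem kummer_jacobi_integral_representation (α β : ℝ) (hα : 1 < α) (hβ : 1 < β)
    (l : ℕ) (x : ℝ) (hx : 0 < x) :
    ((((2 : ℝ) ^ (α + β + l - 1) : ℝ) : ℂ) * I ^ l / (l.factorial : ℂ)) *
        ((eulerBeta (α + l) (β + l) : ℝ) : ℂ) *
        ((x ^ l : ℝ) : ℂ) * Complex.exp (I * x) *
        kummer (α + l) (α + β + 2 * l) (-2 * I * x) =
      ∫ v in Set.Ioo (-1 : ℝ) 1,
        ((jacobiP (α - 1) (β - 1) l v : ℝ) : ℂ) * Complex.exp (I * v * x) *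
          (((1 - v) ^ (α - 1) * (1 + v) ^ (β - 1) : ℝ) : ℂ) := by
  rw [← integral_Ioc_eq_integral_Ioo, ← intervalIntegral.integral_of_le (by norm_num)]
  have hfun : (fun u : ℝ => (1 - u) ^ (α - 1 + l) * (1 + u) ^ (β - 1 + l)) =
      jacobiWeight 1 (α - 1 + l) (β - 1 + l) := by
    ext u; simp [jacobiWeight]
  -- The weight cancels the prefactor in the Rodrigues formula.
  have hcancel : ∀ v ∈ Set.Ioo (-1 : ℝ) 1,
      ((jacobiP (α - 1) (β - 1) l v : ℝ) : ℂ) * Complex.exp (I * v * x) *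
          (((1 - v) ^ (α - 1) * (1 + v) ^ (β - 1) : ℝ) : ℂ) =
      ((-1) ^ l / (2 ^ l * (l.factorial : ℂ))) *
        (((iteratedDeriv l (jacobiWeight 1 (α - 1 + l) (β - 1 + l)) v : ℝ) : ℂ) *
          Complex.exp (I * v * x)) := by
    intro v hv
    have h1 : (1 - v) ^ (-(α - 1)) * (1 - v) ^ (α - 1) = 1 := by
      rw [← Real.rpow_add (by linarith [hv.2])]; simp
    have h2 : (1 + v) ^ (-(β - 1)) * (1 + v) ^ (β - 1) = 1 := by
      rw [← Real.rpow_add (by linarith [hv.1])]; simp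
    have h3 : jacobiP (α - 1) (β - 1) l v * ((1 - v) ^ (α - 1) * (1 + v) ^ (β - 1)) =
        ((-1) ^ l / (2 ^ l * (l.factorial : ℝ))) *
          iteratedDeriv l (jacobiWeight 1 (α - 1 + l) (β - 1 + l)) v := by
      rw [jacobiP, hfun]
      linear_combination ((-1) ^ l / (2 ^ l * (l.factorial : ℝ))) *
          iteratedDeriv l (jacobiWeight 1 (α - 1 + l) (β - 1 + l)) v *
          ((1 + v) ^ (-(β - 1)) * (1 + v) ^ (β - 1) * h1 + h2)
    rw [mul_right_comm, ← Complex.ofReal_mul, h3]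
    push_cast
    ring
  rw [integral_congr_on_Ioo hcancel, intervalIntegral.integral_const_mul,
    integral_iteratedDeriv_jacobiWeight (by linarith) (by linarith)]
  -- Substitute `v = 1 - 2 t`.
  have hsub := intervalIntegral.integral_comp_sub_mul (a := 0) (b := 1) (c := 2)
    (fun v : ℝ => ((jacobiWeight 1 (α - 1 + l) (β - 1 + l) v : ℝ) : ℂ) * Complex.exp (I * v * x))
    two_ne_zero 1
  norm_num only [mul_one, mul_zero, sub_zero] at hsub
  have hint : ∀ t ∈ Set.uIcc (0 : ℝ) 1,
      ((jacobiWeight 1 (α - 1 + l) (β - 1 + l) (1 - 2 * t) : ℝ) : ℂ) *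
        Complex.exp (I * ((1 - 2 * t : ℝ) : ℂ) * x) =
      ((2 ^ (α - 1 + l) * 2 ^ (β - 1 + l) : ℝ) : ℂ) * Complex.exp (I * x) *
      (((t ^ (α + l - 1) * (1 - t) ^ (β + l - 1) : ℝ) : ℂ) * Complex.exp (-2 * I * x * t)) := by
    intro t ht
    rw [Set.uIcc_of_le zero_le_one] at ht
    have e1 : Complex.exp (I * ((1 - 2 * t : ℝ) : ℂ) * x) =
        Complex.exp (I * x) * Complex.exp (-2 * I * x * t) := by
      rw [← Complex.exp_add]; congr 1; push_cast; ring
    have e2 : jacobiWeight 1 (α - 1 + l) (β - 1 + l) (1 - 2 * t) =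
        2 ^ (α - 1 + l) * 2 ^ (β - 1 + l) * (t ^ (α + l - 1) * (1 - t) ^ (β + l - 1)) := by
      rw [jacobiWeight, show 1 - (1 - 2 * t) = 2 * t by ring,
        show 1 + (1 - 2 * t) = 2 * (1 - t) by ring, Real.mul_rpow zero_le_two ht.1,
        Real.mul_rpow zero_le_two (by linarith [ht.2]), sub_add_eq_add_sub α,
        sub_add_eq_add_sub β, Polynomial.eval_one]
      ring
    rw [e1, e2]
    push_cast
    ring
  have hl : (0 : ℝ) ≤ l := l.cast_nonneg
  rw [intervalIntegral.integral_congr hint, intervalIntegral.integral_const_mul,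
    integral_kummer (by linarith) (by linarith)] at hsub
  rw [Complex.real_smul] at hsub
  push_cast at hsub
  have hpow : 2 * (((2 : ℝ) ^ (α - 1 + l) : ℝ) : ℂ) * (((2 : ℝ) ^ (β - 1 + l) : ℝ) : ℂ) =
      2 ^ l * (((2 : ℝ) ^ (α + β + l - 1) : ℝ) : ℂ) := by
    have h : 2 * (2 : ℝ) ^ (α - 1 + l) * (2 : ℝ) ^ (β - 1 + l) =
        2 ^ l * (2 : ℝ) ^ (α + β + l - 1) := by
      rw [← Real.rpow_natCast 2 l, ← Real.rpow_add two_pos, mul_assoc, ← Real.rpow_add two_pos,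
        ← Real.rpow_one_add' zero_le_two (by linarith)]
      congr 1; ring
    exact_mod_cast h
  have hsign : (-1 : ℂ) ^ l * (-(I * x)) ^ l = I ^ l * x ^ l := by
    rw [← mul_pow, ← mul_pow]; congr 1; ring
  rw [show α + l + (β + l) = α + β + 2 * l by ring] at hsub
  have hfac : (l.factorial : ℂ) ≠ 0 := by exact_mod_cast l.factorial_ne_zero
  push_cast
  generalize (∫ v in (-1 : ℝ)..1, ((jacobiWeight 1 (α - 1 + l) (β - 1 + l) v : ℝ) : ℂ) *
    Complex.exp (I * v * x)) = J at hsub ⊢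
  have hR : (-1 : ℂ) ^ l / (2 ^ l * (l.factorial : ℂ)) * ((-(I * x)) ^ l * J) =
      I ^ l * x ^ l * J / (2 ^ l * (l.factorial : ℂ)) := by
    rw [← hsign]; ring
  rw [hR]
  generalize kummer (α + l) (α + β + 2 * l) (-2 * I * x) = K at hsub ⊢
  field_simp
  linear_combination (2 * (x : ℂ) ^ l) * hsub - (x : ℂ) ^ l *
    (eulerBeta (α + l) (β + l) : ℂ) * Complex.exp (I * x) * K * hpow
end
end

section
/- Let α, β > 1 be real numbers, l ∈ ℕ, and x ∈ ℝ. Then ∫_{−1}^{1} P_l^{α−1,β−1}(v) e^{ixv} (1−v)^{α−1}(1+v)^{β−1} dv = (i^l x^l / (2^l l!)) · ∫_{−1}^{1} e^{ixv} (1−v)^{α+l−1}(1+v)^{β+l−1} dv. -/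
/-!
The factor `(1-v)^(-(α-1)) (1+v)^(-(β-1))` in the Rodrigues formula cancels the weight, so on
`(-1,1)` the left-hand integrand is a constant times `w⁽ˡ⁾(v) e^{ixv}`, where
`w(v) = (1-v)^a (1+v)^b`, `a = α-1+l`, `b = β-1+l`. The identity then follows from `l` integrations
by parts, each of which turns a derivative of `w` into a factor `-ix`.

The boundary terms vanish because `w⁽ᵏ⁾(v) = (1-v)^(a-k) (1+v)^(b-k) pₖ(v)` on `(-1,1)` for a
polynomial `pₖ` (`iteratedDeriv_weight`), and for `k ≤ l` both exponents `a-k`, `b-k` are positive: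
the right-hand side is continuous on the whole line and zero at `±1`. A single integration by parts
is `integral_exp_weightDeriv_succ`.
-/

open MeasureTheory
open Complex (I)

noncomputable section

open Polynomial in
/-- The polynomial `pₖ` such that the `k`-th derivative of `(1-u)^a (1+u)^b` on `(-1,1)` is
`(1-u)^(a-k) (1+u)^(b-k) pₖ(u)`. -/
def weightPoly (a b : ℝ) : ℕ → Polynomial ℝ
  | 0 => 1
  | k + 1 => (C (b - k) * (1 - X) - C (a - k) * (1 + X)) * weightPoly a b k
      + (1 - X) * (1 + X) * derivative (weightPoly a b k)

/-- The closed form `(1-u)^(a-k) (1+u)^(b-k) pₖ(u)` of the `k`-th derivative of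
`(1-u)^a (1+u)^b` on `(-1,1)`. Unlike the iterated derivative, it has controlled values at the
endpoints `±1`. -/
def weightDeriv (a b : ℝ) (k : ℕ) (u : ℝ) : ℝ :=
  (1 - u) ^ (a - k) * (1 + u) ^ (b - k) * (weightPoly a b k).eval u

lemma hasDerivAt_weightDeriv (a b : ℝ) (k : ℕ) {u : ℝ} (hu : u ∈ Set.Ioo (-1 : ℝ) 1) :
    HasDerivAt (weightDeriv a b k) (weightDeriv a b (k + 1) u) u := by
  have h1 : 0 < 1 - u := by linarith [hu.2]
  have h2 : 0 < 1 + u := by linarith [hu.1]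
  have d1 := ((hasDerivAt_id u).const_sub 1).rpow_const (p := a - k) (Or.inl h1.ne')
  have d2 := ((hasDerivAt_id u).const_add 1).rpow_const (p := b - k) (Or.inl h2.ne')
  have d := (d1.mul d2).mul ((weightPoly a b k).hasDerivAt u)
  have e1 : (1 - u) ^ (a - k) = (1 - u) ^ (a - k - 1) * (1 - u) := by
    rw [← Real.rpow_add_one h1.ne']; congr 1; ring
  have e2 : (1 + u) ^ (b - k) = (1 + u) ^ (b - k - 1) * (1 + u) := by
    rw [← Real.rpow_add_one h2.ne']; congr 1; ring
  refine d.congr_deriv ?_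
  simp only [weightDeriv, weightPoly, id, Pi.mul_apply, Nat.cast_add, Nat.cast_one, ← sub_sub,
    e1, e2, Polynomial.eval_add, Polynomial.eval_mul, Polynomial.eval_sub, Polynomial.eval_C,
    Polynomial.eval_X, Polynomial.eval_one]
  ring

lemma iteratedDeriv_weight (a b : ℝ) (k : ℕ) :
    Set.EqOn (iteratedDeriv k fun u : ℝ => (1 - u) ^ a * (1 + u) ^ b) (weightDeriv a b k)
      (Set.Ioo (-1) 1) := by
  induction k with
  | zero => intro u _; simp [weightDeriv, weightPoly]
  | succ k ih =>
    intro u hu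
    rw [iteratedDeriv_succ, (ih.eventuallyEq_of_mem (isOpen_Ioo.mem_nhds hu)).deriv_eq]
    exact (hasDerivAt_weightDeriv a b k hu).deriv

lemma continuous_weightDeriv {a b : ℝ} {k : ℕ} (ha : k < a) (hb : k < b) :
    Continuous (weightDeriv a b k) :=
  (((continuous_const.sub continuous_id).rpow_const fun _ => Or.inr (sub_pos.2 ha).le).mul
    ((continuous_const.add continuous_id).rpow_const fun _ => Or.inr (sub_pos.2 hb).le)).mul
    (weightPoly a b k).continuous

lemma weightDeriv_one {a b : ℝ} {k : ℕ} (ha : k < a) : weightDeriv a b k 1 = 0 := by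
  simp [weightDeriv, Real.zero_rpow (sub_pos.2 ha).ne']

lemma weightDeriv_neg_one {a b : ℝ} {k : ℕ} (hb : k < b) : weightDeriv a b k (-1) = 0 := by
  simp [weightDeriv, Real.zero_rpow (sub_pos.2 hb).ne']

/-- One integration by parts. The hypotheses make the `k`-th and `(k+1)`-st derivatives of the
weight continuous up to the endpoints and the boundary terms zero. -/
lemma integral_exp_weightDeriv_succ {a b : ℝ} {k : ℕ} (ha : (k + 1 : ℕ) < a)
    (hb : (k + 1 : ℕ) < b) (x : ℝ) :
    ∫ v in (-1 : ℝ)..1, Complex.exp (I * x * v) * (weightDeriv a b (k + 1) v : ℂ) =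
      -(I * x) * ∫ v in (-1 : ℝ)..1, Complex.exp (I * x * v) * (weightDeriv a b k v : ℂ) := by
  have ha' : (k : ℝ) < a := by push_cast at ha; linarith
  have hb' : (k : ℝ) < b := by push_cast at hb; linarith
  have hexp (v : ℝ) : HasDerivAt (fun v : ℝ => Complex.exp (I * x * v))
      (Complex.exp (I * x * v) * (I * x)) v := by
    simpa using ((hasDerivAt_id v).ofReal_comp.const_mul (I * (x : ℂ))).cexp
  have hc := Complex.continuous_ofReal.comp (continuous_weightDeriv ha' hb')
  have hc' := Complex.continuous_ofReal.comp (continuous_weightDeriv ha hb)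
  have key := intervalIntegral.integral_mul_deriv_eq_deriv_mul_of_hasDerivAt
    (a := (-1 : ℝ)) (b := 1)
    (u := fun v : ℝ => Complex.exp (I * x * v))
    (u' := fun v : ℝ => Complex.exp (I * x * v) * (I * x))
    (v := fun v => (weightDeriv a b k v : ℂ)) (v' := fun v => (weightDeriv a b (k + 1) v : ℂ))
    (by fun_prop) hc.continuousOn (fun v _ => hexp v)
    (fun v hv => (hasDerivAt_weightDeriv a b k (by simpa using hv)).ofReal_comp)
    (Continuous.intervalIntegrable (by fun_prop) _ _) (hc'.intervalIntegrable _ _)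
  rw [key, weightDeriv_one ha', weightDeriv_neg_one hb', ← intervalIntegral.integral_const_mul,
    Complex.ofReal_zero, mul_zero, mul_zero, sub_zero, zero_sub, ← intervalIntegral.integral_neg]
  congr 1
  ext v
  ring

lemma integral_exp_weightDeriv {a b : ℝ} (k : ℕ) (ha : k < a) (hb : k < b) (x : ℝ) :
    ∫ v in (-1 : ℝ)..1, Complex.exp (I * x * v) * (weightDeriv a b k v : ℂ) =
      (-(I * x)) ^ k *
        ∫ v in (-1 : ℝ)..1, Complex.exp (I * x * v) * (weightDeriv a b 0 v : ℂ) := by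
  induction k with
  | zero => simp
  | succ k ih =>
    rw [integral_exp_weightDeriv_succ ha hb, ih (by push_cast at ha; linarith)
      (by push_cast at hb; linarith), pow_succ']
    ring

/-- ∫_{−1}^{1} P_l^{α−1,β−1}(v) e^{ixv} (1−v)^{α−1}(1+v)^{β−1} dv
= (i^l x^l / (2^l l!)) ∫_{−1}^{1} e^{ixv} (1−v)^{α+l−1}(1+v)^{β+l−1} dv. -/
theorem jacobi_weighted_fourier_integral (α β : ℝ) (hα : 1 < α) (hβ : 1 < β)
    (l : ℕ) (x : ℝ) :
    ∫ v in Set.Ioo (-1 : ℝ) 1,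
        ((jacobiP (α - 1) (β - 1) l v : ℝ) : ℂ) * Complex.exp (I * x * v) *
          (((1 - v) ^ (α - 1) * (1 + v) ^ (β - 1) : ℝ) : ℂ) =
      (I ^ l * ((x ^ l : ℝ) : ℂ) / (((2 : ℝ) ^ l * (l.factorial : ℝ) : ℝ) : ℂ)) *
        ∫ v in Set.Ioo (-1 : ℝ) 1,
          Complex.exp (I * x * v) *
            (((1 - v) ^ (α + l - 1) * (1 + v) ^ (β + l - 1) : ℝ) : ℂ) := by
  have key := integral_exp_weightDeriv (a := α - 1 + l) (b := β - 1 + l) l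
    (by linarith) (by linarith) x
  simp only [intervalIntegral.integral_of_le (show (-1 : ℝ) ≤ 1 by norm_num),
    integral_Ioc_eq_integral_Ioo] at key
  have hL : Set.EqOn
      (fun v : ℝ => ((jacobiP (α - 1) (β - 1) l v : ℝ) : ℂ) * Complex.exp (I * x * v) *
          (((1 - v) ^ (α - 1) * (1 + v) ^ (β - 1) : ℝ) : ℂ))
      (fun v : ℝ => (((-1 : ℝ) ^ l / ((2 : ℝ) ^ l * (l.factorial : ℝ)) : ℝ) : ℂ) *
        (Complex.exp (I * x * v) * (weightDeriv (α - 1 + l) (β - 1 + l) l v : ℂ)))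
      (Set.Ioo (-1) 1) := by
    intro v hv
    have h1 : 0 < 1 - v := by linarith [hv.2]
    have h2 : 0 < 1 + v := by linarith [hv.1]
    have c1 : (1 - v) ^ (-(α - 1)) * (1 - v) ^ (α - 1) = 1 := by
      rw [← Real.rpow_add h1]; simp
    have c2 : (1 + v) ^ (-(β - 1)) * (1 + v) ^ (β - 1) = 1 := by
      rw [← Real.rpow_add h2]; simp
    have hP : jacobiP (α - 1) (β - 1) l v * ((1 - v) ^ (α - 1) * (1 + v) ^ (β - 1)) =
        ((-1 : ℝ) ^ l / ((2 : ℝ) ^ l * (l.factorial : ℝ))) *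
          weightDeriv (α - 1 + l) (β - 1 + l) l v := by
      rw [jacobiP, iteratedDeriv_weight _ _ _ hv]
      calc _ = ((-1 : ℝ) ^ l / ((2 : ℝ) ^ l * (l.factorial : ℝ))) *
              weightDeriv (α - 1 + l) (β - 1 + l) l v *
              ((1 - v) ^ (-(α - 1)) * (1 - v) ^ (α - 1)) *
              ((1 + v) ^ (-(β - 1)) * (1 + v) ^ (β - 1)) := by ring
        _ = _ := by rw [c1, c2, mul_one, mul_one]
    dsimp only
    rw [mul_right_comm, ← Complex.ofReal_mul, hP, Complex.ofReal_mul]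
    ring
  have hR (v : ℝ) : weightDeriv (α - 1 + l) (β - 1 + l) 0 v =
      (1 - v) ^ (α + l - 1) * (1 + v) ^ (β + l - 1) := by
    simp only [weightDeriv, weightPoly, Nat.cast_zero, sub_zero, Polynomial.eval_one, mul_one,
      sub_add_eq_add_sub]
  rw [setIntegral_congr_fun measurableSet_Ioo hL, integral_const_mul, key]
  simp only [hR]
  rw [← mul_assoc]
  congr 1
  push_cast
  -- the sign `(-1)^l` of the Rodrigues formula absorbs the one from the `l` integrations by parts
  have hs : (-1 : ℂ) ^ l * (-(I * x)) ^ l = I ^ l * (x : ℂ) ^ l := by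
    rw [← mul_pow, ← mul_pow]; ring
  rw [div_mul_eq_mul_div, hs]
end
end
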